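/- arXiv:1810.02846 — 2 statements merged into one kernel-verified Lean document; each statement's English description precedes it below -/
import Mathlib

section
/- Suppose (A,𝔞) is a unital good pair and let 1 := 1_{M_n(A)} and Y := span_𝕜(ξ^b_{r,s} : r,s ∈ [1,n], b ∈ B_𝔠 ⊔ B_1). Then T^A_𝔞(n,d) is generated as a 𝕜-algebra by S^𝔞(n,d) := (M_n(𝔞)^{⊗d})^{S_d} together with the elements 1^{⊗(d−1)} * y = Σ_{e=0}^{d−1} 1^{⊗(d−1−e)} ⊗ y ⊗ 1^{⊗e} for y ∈ Y. Consequently, T^A_𝔞(n,d) is the subalgebra of S^A(n,d) generated by S^𝔞(n,d) and the elements Σ_{e=0}^{d−1} 1^{⊗(d−1−e)} ⊗ ξ ⊗ 1^{⊗e} with ξ ∈ M_n(A). -/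
open Finset

open scoped Classical TensorProduct

noncomputable section

namespace GS

/-- A *good pair* `(A, 𝔞)`: a `𝕜`-superalgebra `A = ev ⊕ od` which is free as a
`𝕜`-supermodule, together with a subalgebra `𝔞 = aa ⊆ A₀` such that `𝔞` and `A/𝔞` are free,
a complement `𝔠 = cc` of `𝔞` in `A₀`, and an `(A,𝔞)`-basis `B = B_𝔞 ⊔ B_𝔠 ⊔ B_1`
(encoded by `bas : Basis β 𝕜 A` with the partition `part : β → Fin 3`,
where `0` = `B_𝔞`, `1` = `B_𝔠`, `2` = `B_1`). -/
structure GoodPair (𝕜 A β : Type) [CommRing 𝕜] [NonUnitalRing A] [Module 𝕜 A] : Type where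
  ev : Submodule 𝕜 A
  od : Submodule 𝕜 A
  compl : IsCompl ev od
  mul_ee : ∀ a ∈ ev, ∀ b ∈ ev, a * b ∈ ev
  mul_eo : ∀ a ∈ ev, ∀ b ∈ od, a * b ∈ od
  mul_oe : ∀ a ∈ od, ∀ b ∈ ev, a * b ∈ od
  mul_oo : ∀ a ∈ od, ∀ b ∈ od, a * b ∈ ev
  free_ev : Module.Free 𝕜 ev
  free_od : Module.Free 𝕜 od
  aa : Submodule 𝕜 A
  aa_le_ev : aa ≤ ev
  aa_mul : ∀ a ∈ aa, ∀ b ∈ aa, a * b ∈ aa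
  free_aa : Module.Free 𝕜 aa
  free_quot : Module.Free 𝕜 (A ⧸ aa)
  cc : Submodule 𝕜 A
  aa_inf_cc : aa ⊓ cc = ⊥
  aa_sup_cc : aa ⊔ cc = ev
  bas : Module.Basis β 𝕜 A
  part : β → Fin 3
  bas_mem_aa : ∀ i, part i = 0 → bas i ∈ aa
  bas_mem_cc : ∀ i, part i = 1 → bas i ∈ cc
  bas_mem_od : ∀ i, part i = 2 → bas i ∈ od

variable {𝕜 A β : Type} [CommRing 𝕜] [NonUnitalRing A] [Module 𝕜 A]

/-- An element is homogeneous if it lies in the even or the odd part. -/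
def Homog (P : GoodPair 𝕜 A β) (a : A) : Prop := a ∈ P.ev ∨ a ∈ P.od

/-- `H`, the set of nonzero homogeneous elements of `A`. -/
def Hset (P : GoodPair 𝕜 A β) : Set A := {a | Homog P a ∧ a ≠ 0}

/-- `⟨𝐚,𝐜⟩ = #{(k,l) : k > l, a_k odd, c_l odd}` (the Koszul sign count). -/
def koz (od : Submodule 𝕜 A) {d : ℕ} (a c : Fin d → A) : ℕ :=
  (univ.filter fun kl : Fin d × Fin d => kl.2 < kl.1 ∧ a kl.1 ∈ od ∧ c kl.2 ∈ od).card

/-- `⟨σ;𝐚⟩ = #{(k,l) : k < l, σ⁻¹k > σ⁻¹l, a_k and a_l odd}`. -/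
def sgnc (od : Submodule 𝕜 A) {d : ℕ} (σ : Equiv.Perm (Fin d)) (a : Fin d → A) : ℕ :=
  (univ.filter fun kl : Fin d × Fin d =>
    kl.1 < kl.2 ∧ σ⁻¹ kl.2 < σ⁻¹ kl.1 ∧ a kl.1 ∈ od ∧ a kl.2 ∈ od).card

/-- `⟨𝐚,𝐫,𝐬⟩ = #{(k,l) : k < l, a_k, a_l odd, (a_k,r_k,s_k) > (a_l,r_l,s_l)}` with respect to
the fixed total order `ord` on `A × [1,n] × [1,n]`. -/
def ang {n : ℕ} (od : Submodule 𝕜 A) (ord : LinearOrder (A × Fin n × Fin n))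
    {d : ℕ} (a : Fin d → A) (r s : Fin d → Fin n) : ℕ :=
  (univ.filter fun kl : Fin d × Fin d =>
    kl.1 < kl.2 ∧ a kl.1 ∈ od ∧ a kl.2 ∈ od ∧
      ord.lt (a kl.2, r kl.2, s kl.2) (a kl.1, r kl.1, s kl.1)).card

/-- `(𝐚,𝐫,𝐬) ∈ Tri^H(n,d)`: all entries are nonzero homogeneous, and a repeated entry
triple forces evenness. -/
def IsTriH (P : GoodPair 𝕜 A β) {n d : ℕ} (a : Fin d → A) (r s : Fin d → Fin n) : Prop :=
  (∀ k, a k ∈ Hset P) ∧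
    ∀ k l : Fin d, k ≠ l → (a k, r k, s k) = (a l, r l, s l) → a k ∈ P.ev

/-- `(𝐛,𝐫,𝐬) ∈ Tri^B(n,d)` for words of basis elements. -/
def IsTriB (P : GoodPair 𝕜 A β) {n d : ℕ} (b : Fin d → β) (r s : Fin d → Fin n) : Prop :=
  ∀ k l : Fin d, k ≠ l → ((b k, r k, s k) : β × Fin n × Fin n) = (b l, r l, s l) →
    P.part (b k) ≠ 2

/-- Minimal length representatives of the cosets `(S_e × S_f)\S_{e+f}`. -/
def IsShuffle (e f : ℕ) (σ : Equiv.Perm (Fin (e + f))) : Prop :=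
  (∀ k l : Fin (e + f), k < l → (l : ℕ) < e → σ⁻¹ k < σ⁻¹ l) ∧
  (∀ k l : Fin (e + f), k < l → e ≤ (k : ℕ) → σ⁻¹ k < σ⁻¹ l)

/-- The tower of superalgebras `M_n(A)^{⊗d}`, `d ≥ 0`, axiomatised.  `X a r s` is the pure
tensor `ξ^{a_1}_{r_1,s_1} ⊗ ⋯ ⊗ ξ^{a_d}_{r_d,s_d}` of matrix units; it is multilinear in the
`A`-entries, the pure tensors of basis elements form a basis, multiplication is the sign-twisted
(Koszul) componentwise one, `act` is the right action of the symmetric groups by superalgebra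
automorphisms, `evT/odT` is the induced supermodule structure, `star` is the `*`-(shuffle)
product and `nab` gives the components of the deconcatenation coproduct `∇`. -/
structure Tower (𝕜 A β : Type) [CommRing 𝕜] [NonUnitalRing A] [Module 𝕜 A]
    (n : ℕ) (T : ℕ → Type) [∀ e, NonUnitalRing (T e)] [∀ e, Module 𝕜 (T e)]
    (P : GoodPair 𝕜 A β) : Type where
  X : ∀ {e : ℕ}, (Fin e → A) → (Fin e → Fin n) → (Fin e → Fin n) → T e
  X_update_add : ∀ {e : ℕ} (a : Fin e → A) (r s : Fin e → Fin n) (k : Fin e) (x y : A),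
    X (Function.update a k (x + y)) r s
      = X (Function.update a k x) r s + X (Function.update a k y) r s
  X_update_smul : ∀ {e : ℕ} (a : Fin e → A) (r s : Fin e → Fin n) (k : Fin e) (c : 𝕜) (x : A),
    X (Function.update a k (c • x)) r s = c • X (Function.update a k x) r s
  bas : ∀ e : ℕ, Module.Basis ((Fin e → β) × (Fin e → Fin n) × (Fin e → Fin n)) 𝕜 (T e)
  bas_eq : ∀ (e : ℕ) (b : Fin e → β) (r s : Fin e → Fin n),
    bas e (b, r, s) = X (fun k => P.bas (b k)) r s
  X_mul : ∀ {e : ℕ} (a c : Fin e → A) (r s t u : Fin e → Fin n),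
    (∀ k, Homog P (a k)) → (∀ k, Homog P (c k)) →
    X a r s * X c t u
      = if s = t then ((-1 : ℤ) ^ koz P.od a c) • X (fun k => a k * c k) r u else 0
  act : ∀ {e : ℕ}, Equiv.Perm (Fin e) → T e →ₗ[𝕜] T e
  act_act : ∀ {e : ℕ} (σ τ : Equiv.Perm (Fin e)) (x : T e), act τ (act σ x) = act (σ * τ) x
  act_mul : ∀ {e : ℕ} (σ : Equiv.Perm (Fin e)) (x y : T e), act σ (x * y) = act σ x * act σ y
  act_X : ∀ {e : ℕ} (σ : Equiv.Perm (Fin e)) (a : Fin e → A) (r s : Fin e → Fin n),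
    (∀ k, Homog P (a k)) →
    act σ (X a r s) = ((-1 : ℤ) ^ sgnc P.od σ a) • X (a ∘ σ) (r ∘ σ) (s ∘ σ)
  evT : ∀ e : ℕ, Submodule 𝕜 (T e)
  odT : ∀ e : ℕ, Submodule 𝕜 (T e)
  complT : ∀ e : ℕ, IsCompl (evT e) (odT e)
  X_mem_evT : ∀ {e : ℕ} (a : Fin e → A) (r s : Fin e → Fin n), (∀ k, Homog P (a k)) →
    Even (univ.filter fun k => a k ∈ P.od).card → X a r s ∈ evT e
  X_mem_odT : ∀ {e : ℕ} (a : Fin e → A) (r s : Fin e → Fin n), (∀ k, Homog P (a k)) →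
    ¬ Even (univ.filter fun k => a k ∈ P.od).card → X a r s ∈ odT e
  star : ∀ {e f : ℕ}, T e →ₗ[𝕜] T f →ₗ[𝕜] T (e + f)
  star_X : ∀ {e f : ℕ} (a : Fin e → A) (r s : Fin e → Fin n)
      (c : Fin f → A) (t u : Fin f → Fin n),
    star (X a r s) (X c t u)
      = ∑ σ ∈ univ.filter (IsShuffle e f),
          act σ (X (Fin.append a c) (Fin.append r t) (Fin.append s u))
  nab : ∀ e f : ℕ, T (e + f) →ₗ[𝕜] TensorProduct 𝕜 (T e) (T f)
  nab_X : ∀ (e f : ℕ) (a : Fin (e + f) → A) (r s : Fin (e + f) → Fin n),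
    nab e f (X a r s)
      = (X (a ∘ Fin.castAdd f) (r ∘ Fin.castAdd f) (s ∘ Fin.castAdd f))
          ⊗ₜ[𝕜] (X (a ∘ Fin.natAdd e) (r ∘ Fin.natAdd e) (s ∘ Fin.natAdd e))

variable {n : ℕ} {T : ℕ → Type} [∀ e, NonUnitalRing (T e)] [∀ e, Module 𝕜 (T e)]

/-- `ξ^𝐚_{𝐫,𝐬}`, the signed sum of the pure tensors over the `S_d`-orbit of `(𝐚,𝐫,𝐬)`. -/
def xiH {P : GoodPair 𝕜 A β} (D : Tower 𝕜 A β n T P) (ord : LinearOrder (A × Fin n × Fin n))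
    {d : ℕ} (a : Fin d → A) (r s : Fin d → Fin n) : T d :=
  ∑ w ∈ (univ.image fun σ : Equiv.Perm (Fin d) => (a ∘ σ, r ∘ σ, s ∘ σ)),
    ((-1 : ℤ) ^ (ang P.od ord a r s + ang P.od ord w.1 w.2.1 w.2.2)) • D.X w.1 w.2.1 w.2.2

/-- `ξ^𝐛_{𝐫,𝐬}` for a word `𝐛` of basis elements. -/
def xiB {P : GoodPair 𝕜 A β} (D : Tower 𝕜 A β n T P) (ord : LinearOrder (A × Fin n × Fin n))
    {d : ℕ} (b : Fin d → β) (r s : Fin d → Fin n) : T d :=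
  xiH D ord (fun k => P.bas (b k)) r s

/-- `[𝐛,𝐫,𝐬]^b_{r,s}`, the multiplicity of an entry triple in a word triple. -/
def mco {n d : ℕ} (b : Fin d → β) (r s : Fin d → Fin n) (w : β × Fin n × Fin n) : ℕ :=
  (univ.filter fun k => ((b k, r k, s k) : β × Fin n × Fin n) = w).card

/-- `∏ ([𝐛,𝐫,𝐬]^b_{r,s})!` over the entry triples whose basis element satisfies `sel`
(e.g. `sel i = (part i = 1)` gives `[𝐛,𝐫,𝐬]^!_𝔠`). -/
def facSel (sel : β → Prop) {n d : ℕ} (b : Fin d → β) (r s : Fin d → Fin n) : ℕ :=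
  ∏ w ∈ ((univ.image fun k => ((b k, r k, s k) : β × Fin n × Fin n)).filter fun w => sel w.1),
    Nat.factorial (mco b r s w)

/-- `η^𝐛_{𝐫,𝐬} := [𝐛,𝐫,𝐬]^!_𝔠 • ξ^𝐛_{𝐫,𝐬}`. -/
def eta {P : GoodPair 𝕜 A β} (D : Tower 𝕜 A β n T P) (ord : LinearOrder (A × Fin n × Fin n))
    {d : ℕ} (b : Fin d → β) (r s : Fin d → Fin n) : T d :=
  facSel (fun i => P.part i = 1) b r s • xiB D ord b r s

/-- `S^A(n,d) = (M_n(A)^{⊗d})^{S_d}`, the invariants. -/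
def SchurS {P : GoodPair 𝕜 A β} (D : Tower 𝕜 A β n T P) (d : ℕ) : Submodule 𝕜 (T d) where
  carrier := {x | ∀ σ : Equiv.Perm (Fin d), D.act σ x = x}
  add_mem' := by
    intro x y hx hy σ
    rw [map_add, hx σ, hy σ]
  zero_mem' := by
    intro σ; exact map_zero _
  smul_mem' := by
    intro c x hx σ
    rw [map_smul, hx σ]

/-- The generalized Schur algebra `T^A_𝔞(n,d)`, the `𝕜`-span of the `η^𝐛_{𝐫,𝐬}`,
`(𝐛,𝐫,𝐬) ∈ Tri^B(n,d)`. -/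
def SchurT {P : GoodPair 𝕜 A β} (D : Tower 𝕜 A β n T P) (ord : LinearOrder (A × Fin n × Fin n))
    (d : ℕ) : Submodule 𝕜 (T d) :=
  Submodule.span 𝕜 {x | ∃ b r s, IsTriB P b r s ∧ x = eta D ord b r s}

/-- `S^𝔞(n,d) = (M_n(𝔞)^{⊗d})^{S_d} ⊆ S^A(n,d)`. -/
def SchurA {P : GoodPair 𝕜 A β} (D : Tower 𝕜 A β n T P) (d : ℕ) : Submodule 𝕜 (T d) :=
  Submodule.span 𝕜 {x | ∃ a r s, (∀ k, a k ∈ P.aa) ∧ x = D.X a r s} ⊓ SchurS D d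

/-- `ξ^f = E^f ⊗ ⋯ ⊗ E^f` for `f ∈ A`. -/
def xiIdem {P : GoodPair 𝕜 A β} (D : Tower 𝕜 A β n T P) (f : A) (d : ℕ) : T d :=
  ∑ r : Fin d → Fin n, D.X (fun _ => f) r r

/-- Transport along an equality of degrees. -/
def tcast {e f : ℕ} (h : e = f) : T e ≃ₗ[𝕜] T f := by
  subst h; exact LinearEquiv.refl 𝕜 (T e)

/-- Iterated `*`-product `x_1 * x_2 * ⋯ * x_d` of degree-one pure tensors read off from a
word (associated to the left). -/
def starIter {P : GoodPair 𝕜 A β} (D : Tower 𝕜 A β n T P) :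
    ∀ (e : ℕ), (Fin e → A) → (Fin e → Fin n) → (Fin e → Fin n) → T e
  | 0, _, _, _ => D.X Fin.elim0 Fin.elim0 Fin.elim0
  | (e + 1), a, r, s =>
      D.star (starIter D e (a ∘ Fin.castSucc) (r ∘ Fin.castSucc) (s ∘ Fin.castSucc))
        (D.X (fun _ : Fin 1 => a (Fin.last e)) (fun _ => r (Fin.last e)) (fun _ => s (Fin.last e)))

/-- Iterated `*`-product of blockwise given elements. -/
def starBlocks {P : GoodPair 𝕜 A β} (D : Tower 𝕜 A β n T P) :
    ∀ (q : ℕ) (sz : Fin q → ℕ), (∀ m, T (sz m)) → T (∑ m, sz m)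
  | 0, sz, _ => cast (congrArg T (Fin.sum_univ_zero sz).symm) (D.X Fin.elim0 Fin.elim0 Fin.elim0)
  | (q + 1), sz, x =>
      cast (congrArg T (Fin.sum_univ_castSucc sz).symm)
        (D.star (starBlocks D q (fun m => sz m.castSucc) (fun m => x m.castSucc))
          (x (Fin.last q)))

/-- Concatenation of a tuple of words of lengths `sz 0, …, sz (q-1)`. -/
def concatB {α : Type} : ∀ {q : ℕ} (sz : Fin q → ℕ), (∀ m, Fin (sz m) → α) → Fin (∑ m, sz m) → α
  | 0, sz, _ => fun k => Fin.elim0 (cast (congrArg Fin (Fin.sum_univ_zero sz)) k)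
  | (q + 1), sz, f => fun k =>
      Fin.append (concatB (fun m => sz m.castSucc) (fun m => f m.castSucc)) (f (Fin.last q))
        (cast (congrArg Fin (Fin.sum_univ_castSucc sz)) k)

/-- A triple of words `(𝐛,𝐫,𝐬)`. -/
abbrev WordTriple (β : Type) (n d : ℕ) : Type :=
  (Fin d → β) × (Fin d → Fin n) × (Fin d → Fin n)

/-- The diagonal right place-permutation action on triples of words. -/
def wAct {d : ℕ} (w : WordTriple β n d) (σ : Equiv.Perm (Fin d)) : WordTriple β n d :=
  (w.1 ∘ σ, w.2.1 ∘ σ, w.2.2 ∘ σ)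

/-- The `k`-th entry triple `(b_k, r_k, s_k)` (with `b_k` realized in `A`). -/
def entryAt (P : GoodPair 𝕜 A β) {n d : ℕ} (w : WordTriple β n d) (k : Fin d) :
    A × Fin n × Fin n :=
  (P.bas (w.1 k), w.2.1 k, w.2.2 k)

/-- The lexicographic order on triples of words induced by the total order `ord`. -/
def wordLE (P : GoodPair 𝕜 A β) {n : ℕ} (ord : LinearOrder (A × Fin n × Fin n)) {d : ℕ}
    (w w' : WordTriple β n d) : Prop :=
  (∀ k, entryAt P w k = entryAt P w' k) ∨
    ∃ l : Fin d, (∀ k, k < l → entryAt P w k = entryAt P w' k) ∧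
      ord.lt (entryAt P w l) (entryAt P w' l)

/-- `Tri^B_0(n,d)`: the lexicographically minimal representatives of the `S_d`-orbits on
`Tri^B(n,d)`. -/
def IsTri0 (P : GoodPair 𝕜 A β) {n : ℕ} (ord : LinearOrder (A × Fin n × Fin n)) {d : ℕ}
    (w : WordTriple β n d) : Prop :=
  IsTriB P w.1 w.2.1 w.2.2 ∧ ∀ σ : Equiv.Perm (Fin d), wordLE P ord w (wAct w σ)

/-- The first `l` letters of each word. -/
def firstW {d : ℕ} (l : ℕ) (hl : l ≤ d) (w : WordTriple β n d) : WordTriple β n l :=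
  (fun k => w.1 ⟨k, lt_of_lt_of_le k.isLt hl⟩,
   fun k => w.2.1 ⟨k, lt_of_lt_of_le k.isLt hl⟩,
   fun k => w.2.2 ⟨k, lt_of_lt_of_le k.isLt hl⟩)

/-- The last `d - l` letters of each word. -/
def lastW {d : ℕ} (l : ℕ) (hl : l ≤ d) (w : WordTriple β n d) : WordTriple β n (d - l) :=
  (fun k => w.1 ⟨l + (k : ℕ), by have := k.isLt; omega⟩,
   fun k => w.2.1 ⟨l + (k : ℕ), by have := k.isLt; omega⟩,
   fun k => w.2.2 ⟨l + (k : ℕ), by have := k.isLt; omega⟩)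

/-- Concatenation of words. -/
def appF {α : Type} {d : ℕ} (l : ℕ) (hl : l ≤ d) (f : Fin l → α) (g : Fin (d - l) → α) :
    Fin d → α :=
  fun k => if hk : (k : ℕ) < l then f ⟨k, hk⟩ else g ⟨(k : ℕ) - l, by have := k.isLt; omega⟩

/-- Concatenation `T¹T²` of two triples of words. -/
def concatW {d : ℕ} (l : ℕ) (hl : l ≤ d) (p : WordTriple β n l × WordTriple β n (d - l)) :
    WordTriple β n d :=
  (appF l hl p.1.1 p.2.1, appF l hl p.1.2.1 p.2.2.1, appF l hl p.1.2.2 p.2.2.2)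

/-- `Spl_l(T)`, the set of `l`-splits of `T ∈ Tri^B_0(n,d)`. -/
def splitsF (P : GoodPair 𝕜 A β) {n : ℕ} (ord : LinearOrder (A × Fin n × Fin n)) {d : ℕ}
    (l : ℕ) (hl : l ≤ d) (w : WordTriple β n d) :
    Finset (WordTriple β n l × WordTriple β n (d - l)) :=
  (univ.image fun σ : Equiv.Perm (Fin d) =>
      (firstW l hl (wAct w σ), lastW l hl (wAct w σ))).filter
    fun p => IsTri0 P ord p.1 ∧ IsTri0 P ord p.2

/-- The number of inversions (= Coxeter length) of a permutation. -/
def invCount {d : ℕ} (σ : Equiv.Perm (Fin d)) : ℕ :=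
  (univ.filter fun kl : Fin d × Fin d => kl.1 < kl.2 ∧ σ kl.2 < σ kl.1).card

/-- The submodule `{x | x·ε = x}` (for an idempotent `ε` this is `R·ε`). -/
def rfix (𝕜 : Type) {R : Type} [CommRing 𝕜] [NonUnitalRing R] [Module 𝕜 R]
    [IsScalarTower 𝕜 R R] (ε : R) : Submodule 𝕜 R where
  carrier := {x | x * ε = x}
  add_mem' := by
    intro x y hx hy
    simp only [Set.mem_setOf_eq] at *
    rw [add_mul, hx, hy]
  zero_mem' := by simp
  smul_mem' := by
    intro c x hx
    simp only [Set.mem_setOf_eq] at *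
    rw [smul_mul_assoc, hx]

/-- Right `εSε`-module endomorphism property for a map of `S·ε = M ⊓ rfix ε`,
where `S` is the (possibly non-unital) algebra realized as the submodule `M` of `R`. -/
def IsEquivar (𝕜 : Type) {R : Type} [CommRing 𝕜] [NonUnitalRing R] [Module 𝕜 R]
    [IsScalarTower 𝕜 R R] (M : Submodule 𝕜 R) (ε : R)
    (f : ↥(M ⊓ rfix 𝕜 ε) →ₗ[𝕜] ↥(M ⊓ rfix 𝕜 ε)) : Prop :=
  ∀ (x : ↥(M ⊓ rfix 𝕜 ε)) (c : R), c ∈ M → ε * c * ε = c →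
    ∀ h : (x : R) * c ∈ M ⊓ rfix 𝕜 ε,
      ((f ⟨(x : R) * c, h⟩ : ↥(M ⊓ rfix 𝕜 ε)) : R) = (f x : R) * c

/-- `ε` is a *double centralizer idempotent* for the algebra `M ⊆ R`: the left
multiplication map `λ : M → End_{εMε}(Mε)` is bijective. -/
def IsDCI (𝕜 : Type) {R : Type} [CommRing 𝕜] [NonUnitalRing R] [Module 𝕜 R]
    [IsScalarTower 𝕜 R R] (M : Submodule 𝕜 R) (ε : R) : Prop :=
  (∀ s ∈ M, ∀ s' ∈ M, (∀ x ∈ M ⊓ rfix 𝕜 ε, s * x = s' * x) → s = s') ∧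
  (∀ f : ↥(M ⊓ rfix 𝕜 ε) →ₗ[𝕜] ↥(M ⊓ rfix 𝕜 ε), IsEquivar 𝕜 M ε f →
    ∃ s ∈ M, ∀ x : ↥(M ⊓ rfix 𝕜 ε), (f x : R) = s * (x : R))

/-- `1^{⊗(d−1−e)} ⊗ ξ ⊗ 1^{⊗e}` with the matrix `ξ = m ∈ M_n(A)` inserted in slot `j`,
expanded in pure tensors of matrix units (`one` is the unit of `A`). -/
def insSlot {𝕜 A β : Type} [CommRing 𝕜] [NonUnitalRing A] [Module 𝕜 A]
    {n : ℕ} {T : ℕ → Type} [∀ e, NonUnitalRing (T e)] [∀ e, Module 𝕜 (T e)]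
    {P : GoodPair 𝕜 A β} (D : Tower 𝕜 A β n T P) (one : A) {d : ℕ} (j : Fin d)
    (m : Matrix (Fin n) (Fin n) A) : T d :=
  ∑ p ∈ (univ.filter fun p : (Fin d → Fin n) × (Fin d → Fin n) =>
      ∀ k, k ≠ j → p.1 k = p.2 k),
    D.X (fun k => if k = j then m (p.1 j) (p.2 j) else one) p.1 p.2

/-- The span of the matrix units `ξ^b_{r,s}` with `b ∈ B_𝔠 ⊔ B_1`, i.e. `Y ⊆ M_n(A)`. -/
def Ymat {𝕜 A β : Type} [CommRing 𝕜] [NonUnitalRing A] [Module 𝕜 A] {n : ℕ}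
    (P : GoodPair 𝕜 A β) : Submodule 𝕜 (Matrix (Fin n) (Fin n) A) :=
  Submodule.span 𝕜 {m | ∃ (i : β) (r s : Fin n), P.part i ≠ 0 ∧
    m = Matrix.single r s (P.bas i)}

/-! ### Group-theoretic preliminaries -/

/-- Sum of an invariant function over an invariant finite set, orbit by orbit. -/
theorem orbit_sum {G W M : Type} [Group G] [Finite G] [MulAction G W] [AddCommMonoid M]
    (S : AddSubmonoid M) (s : Finset W) (hs : ∀ (g : G), ∀ w ∈ s, g • w ∈ s)
    (φ : W → M) (hφ : ∀ (g : G) w, φ (g • w) = φ w)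
    (h : ∀ w ∈ s, ∃ y ∈ S, φ w = Nat.card (MulAction.stabilizer G w) • y) :
    ∃ y ∈ S, ∑ w ∈ s, φ w = Nat.card G • y := by
  have := Fintype.ofFinite G
  have : ∀ w : W, Fintype (MulAction.orbit G w) :=
    fun w => (Set.finite_range (fun g : G => g • w)).fintype
  rw [Finset.sum_partition (MulAction.orbitRel G W)]
  have key : ∀ xb ∈ s.image (Quotient.mk (MulAction.orbitRel G W)),
      ∃ y ∈ S, ∑ y ∈ s with (Quotient.mk (MulAction.orbitRel G W) y) = xb, φ y
        = Nat.card G • y := by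
    intro xb hxb
    obtain ⟨w, hw, rfl⟩ := Finset.mem_image.1 hxb
    obtain ⟨y, hy, e⟩ := h w hw
    refine ⟨y, hy, ?_⟩
    have h1 : (s.filter fun y => (Quotient.mk (MulAction.orbitRel G W) y)
        = Quotient.mk (MulAction.orbitRel G W) w) = (MulAction.orbit G w).toFinset := by
      ext v
      simp only [Finset.mem_filter, Set.mem_toFinset, Quotient.eq, MulAction.orbitRel_apply]
      constructor
      · exact fun h => h.2
      · rintro ⟨g, rfl⟩
        exact ⟨hs g w hw, ⟨g, rfl⟩⟩
    rw [h1, Finset.sum_congr rfl (g := fun _ => φ w), Finset.sum_const, Set.toFinset_card, e,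
      ← mul_smul, Nat.card_eq_fintype_card, Nat.card_eq_fintype_card,
      MulAction.card_orbit_mul_card_stabilizer_eq_card_group]
    intro v hv
    rw [Set.mem_toFinset] at hv
    obtain ⟨g, rfl⟩ := hv
    exact hφ g w
  choose! Y hY hY2 using key
  refine ⟨∑ xb ∈ s.image (Quotient.mk (MulAction.orbitRel G W)), Y xb, S.sum_mem hY, ?_⟩
  rw [Finset.smul_sum]
  exact Finset.sum_congr rfl hY2

/-- The permutations fixing `M` pointwise and preserving `f`. -/
def StM {γ : Type} {d : ℕ} (f : Fin d → γ) (M : Set (Fin d)) : Subgroup (Equiv.Perm (Fin d)) where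
  carrier := {σ | (∀ k ∈ M, σ k = k) ∧ ∀ k, f (σ k) = f k}
  mul_mem' := by
    rintro a b ⟨h1, h2⟩ ⟨h3, h4⟩
    refine ⟨fun k hk => ?_, fun k => ?_⟩
    · rw [Equiv.Perm.mul_apply, h3 k hk, h1 k hk]
    · rw [Equiv.Perm.mul_apply, h2, h4]
  one_mem' := by simp
  inv_mem' := by
    rintro a ⟨h1, h2⟩
    refine ⟨fun k hk => ?_, fun k => ?_⟩
    · rw [Equiv.Perm.inv_eq_iff_eq, h1 k hk]
    · rw [← h2]; simp

theorem mem_StM {γ : Type} {d : ℕ} {f : Fin d → γ} {M : Set (Fin d)} {σ : Equiv.Perm (Fin d)} :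
    σ ∈ StM f M ↔ (∀ k ∈ M, σ k = k) ∧ ∀ k, f (σ k) = f k := Iff.rfl

/-- The cardinality of `StM f M`, when `M` is the preimage of a set of values. -/
theorem card_StM {γ : Type} {d : ℕ} (f : Fin d → γ) (sel : γ → Prop) :
    Nat.card (StM f {k | ¬ sel (f k)})
      = ∏ w ∈ (univ.image f).filter sel, Nat.factorial (univ.filter fun k => f k = w).card := by
  set g : Fin d → γ ⊕ Fin d := fun k => if sel (f k) then Sum.inl (f k) else Sum.inr k with hg
  have e1 : Nat.card (StM f {k | ¬ sel (f k)}) = Fintype.card {σ : Equiv.Perm (Fin d) // g ∘ σ = g} := by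
    rw [← Nat.card_eq_fintype_card]
    apply Nat.card_congr
    apply Equiv.subtypeEquivRight
    intro σ
    rw [mem_StM]
    constructor
    · rintro ⟨h1, h2⟩
      funext k
      simp only [hg, Function.comp, h2]
      split_ifs with h
      · rfl
      · rw [h1 k h]
    · intro h
      have h' : ∀ k, g (σ k) = g k := fun k => congrFun h k
      have h1 : ∀ k, ¬ sel (f k) → σ k = k := by
        intro k hk
        have := h' k
        simp only [hg, if_neg hk] at this
        split_ifs at this
        exact Sum.inr_injective this
      refine ⟨h1, fun k => ?_⟩
      by_cases hk : sel (f k)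
      · have := h' k
        simp only [hg, if_pos hk] at this
        split_ifs at this
        exact Sum.inl_injective this
      · rw [h1 k hk]
  rw [e1, DomMulAct.stabilizer_card']
  have e2 : ∏ w ∈ (univ.image f).filter sel, Nat.factorial (univ.filter fun k => f k = w).card
      = ∏ i ∈ ((univ.image f).filter sel).image Sum.inl,
        Nat.factorial (Fintype.card {a // g a = i}) := by
    rw [Finset.prod_image (fun _ _ _ _ h => Sum.inl_injective h)]
    refine Finset.prod_congr rfl fun w hw => ?_
    rw [Fintype.card_subtype]
    congr 2
    ext k
    simp only [mem_filter, mem_univ, true_and, hg]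
    rw [mem_filter] at hw
    constructor
    · rintro rfl; rw [if_pos hw.2]
    · intro h; split_ifs at h; exact Sum.inl_injective h
  rw [e2]
  symm
  apply Finset.prod_subset
  · intro i hi
    obtain ⟨w, hw, rfl⟩ := Finset.mem_image.1 hi
    obtain ⟨hw1, hw2⟩ := Finset.mem_filter.1 hw
    obtain ⟨k, -, rfl⟩ := Finset.mem_image.1 hw1
    exact Finset.mem_image.2 ⟨k, mem_univ _, by simp only [hg, if_pos hw2]⟩
  · intro i hi hni
    obtain ⟨k, -, rfl⟩ := Finset.mem_image.1 hi
    by_cases hk : sel (f k)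
    · exact absurd (Finset.mem_image.2 ⟨f k, Finset.mem_filter.2
        ⟨Finset.mem_image_of_mem _ (mem_univ _), hk⟩, by simp only [hg, if_pos hk]⟩) hni
    · have : Fintype.card {a // g a = g k} ≤ 1 := by
        rw [Fintype.card_le_one_iff]
        rintro ⟨a, ha⟩ ⟨b, hb⟩
        have : ∀ a, g a = g k → a = k := by
          intro a ha
          simp only [hg, if_neg hk] at ha
          split_ifs at ha
          exact Sum.inr_injective ha
        simp [this a ha, this b hb]
      exact Nat.factorial_eq_one.2 this

theorem card_dvd_of_coe {d : ℕ} {H : Subgroup (Equiv.Perm (Fin d))} (K : Subgroup H)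
    (L : Subgroup (Equiv.Perm (Fin d))) (h : ∀ k ∈ K, (k : Equiv.Perm (Fin d)) ∈ L) :
    Nat.card K ∣ Nat.card L := by
  refine Subgroup.card_dvd_of_injective ((H.subtype.comp K.subtype).codRestrict L fun k => h k k.2) ?_
  intro a b hab
  have := congrArg Subtype.val hab
  exact Subtype.ext (Subtype.ext this)

/-- The inversion count with respect to a parity word. -/
def sgq {d : ℕ} (σ : Equiv.Perm (Fin d)) (q : Fin d → Prop) : ℕ :=
  (univ.filter fun kl : Fin d × Fin d =>
    kl.1 < kl.2 ∧ σ⁻¹ kl.2 < σ⁻¹ kl.1 ∧ q kl.1 ∧ q kl.2).card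

/-- The Koszul count of two parity words. -/
def kzq {d : ℕ} (q q' : Fin d → Prop) : ℕ :=
  (univ.filter fun kl : Fin d × Fin d => kl.2 < kl.1 ∧ q kl.1 ∧ q' kl.2).card

theorem sgq_eq_zero {d : ℕ} (σ : Equiv.Perm (Fin d)) (q : Fin d → Prop)
    (h : ∀ k, q k → σ k = k) : sgq σ q = 0 := by
  rw [sgq, Finset.card_eq_zero, Finset.filter_eq_empty_iff]
  rintro ⟨k, l⟩ - ⟨h1, h2, h3, h4⟩
  have e1 : σ⁻¹ k = k := by rw [Equiv.Perm.inv_eq_iff_eq, h k h3]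
  have e2 : σ⁻¹ l = l := by rw [Equiv.Perm.inv_eq_iff_eq, h l h4]
  simp only at h1 h2
  rw [e1, e2] at h2
  exact absurd h1 (not_lt.2 h2.le)

theorem sgq_single {d : ℕ} (σ : Equiv.Perm (Fin d)) (q : Fin d → Prop) (j : Fin d)
    (h : ∀ k, q k → k = j) : sgq σ q = 0 := by
  rw [sgq, Finset.card_eq_zero, Finset.filter_eq_empty_iff]
  rintro ⟨k, l⟩ - ⟨h1, h2, h3, h4⟩
  rw [h k h3, h l h4] at h1
  exact lt_irrefl _ h1

/-- Swapping two odd positions gives an odd sign. -/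
theorem sgq_swap {d : ℕ} (q : Fin d → Prop) (k l : Fin d) (hkl : k < l) (hk : q k) (hl : q l) :
    Odd (sgq (Equiv.swap k l) q) := by
  set B := univ.filter fun m : Fin d => k < m ∧ m < l ∧ q m with hB
  have : (univ.filter fun kl : Fin d × Fin d =>
    kl.1 < kl.2 ∧ (Equiv.swap k l)⁻¹ kl.2 < (Equiv.swap k l)⁻¹ kl.1 ∧ q kl.1 ∧ q kl.2)
      = insert (k, l) ((B.image fun m => (k, m)) ∪ (B.image fun m => (m, l))) := by
    ext ⟨x, y⟩
    simp only [mem_filter, mem_univ, true_and, mem_insert, mem_union, mem_image, hB, Prod.mk.injEq]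
    rw [Equiv.swap_inv]
    constructor
    · rintro ⟨h1, h2, h3, h4⟩
      rw [Equiv.swap_apply_def, Equiv.swap_apply_def] at h2
      by_cases hx : x = k
      · by_cases hy : y = l
        · exact Or.inl ⟨hx, hy⟩
        · right; left
          refine ⟨y, ⟨by rw [← hx]; exact h1, ?_, h4⟩, hx.symm, rfl⟩
          subst hx
          rw [if_neg h1.ne', if_neg hy, if_pos rfl] at h2
          exact h2
      · right; right
        by_cases hxl : x = l
        · subst hxl
          rw [if_neg hx, if_neg (hkl.trans h1).ne', if_neg h1.ne', if_pos rfl] at h2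
          exact absurd (hkl.trans h1) (not_lt.2 h2.le)
        · rw [if_neg hx, if_neg hxl] at h2
          by_cases hyl : y = l
          · subst hyl
            rw [if_neg hkl.ne', if_pos rfl] at h2
            exact ⟨x, ⟨h2, h1, h3⟩, rfl, rfl⟩
          · by_cases hyk : y = k
            · subst hyk
              rw [if_pos rfl] at h2
              exact absurd (hkl.trans h2) (not_lt.2 h1.le)
            · rw [if_neg hyk, if_neg hyl] at h2
              exact absurd h1 (not_lt.2 h2.le)
    · rintro (⟨rfl, rfl⟩ | ⟨m, ⟨h1, h2, h3⟩, rfl, rfl⟩ | ⟨m, ⟨h1, h2, h3⟩, rfl, rfl⟩)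
      · simp [hkl, hk, hl]
      · refine ⟨h1, ?_, hk, h3⟩
        rw [Equiv.swap_apply_left, Equiv.swap_apply_of_ne_of_ne h1.ne' h2.ne]
        exact h2
      · refine ⟨h2, ?_, h3, hl⟩
        rw [Equiv.swap_apply_right, Equiv.swap_apply_of_ne_of_ne h1.ne' h2.ne]
        exact h1
  rw [sgq, this, Finset.card_insert_of_notMem, Finset.card_union_of_disjoint,
    Finset.card_image_of_injective _ (fun a b h => (Prod.mk.inj h).2),
    Finset.card_image_of_injective _ (fun a b h => (Prod.mk.inj h).1)]
  · exact ⟨B.card, by ring⟩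
  · rw [Finset.disjoint_left]
    rintro ⟨x, y⟩ h1 h2
    simp only [mem_image, hB, mem_filter, mem_univ, true_and, Prod.mk.injEq] at h1 h2
    obtain ⟨m, hm, rfl, rfl⟩ := h1
    obtain ⟨m', hm', rfl, rfl⟩ := h2
    exact lt_irrefl _ hm'.1
  · simp only [mem_image, hB, mem_filter, mem_univ, true_and, Prod.mk.injEq, mem_union, not_or]
    constructor
    · rintro ⟨m, hm, -, rfl⟩; exact lt_irrefl _ hm.2.1
    · rintro ⟨m, hm, rfl, -⟩; exact lt_irrefl _ hm.1

/-- The sign of the rearrangement of an odd word with distinct letters. -/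
theorem sgq_ang {γ : Type} (ord : LinearOrder γ) {d : ℕ} (σ : Equiv.Perm (Fin d)) (q : Fin d → Prop)
    (f : Fin d → γ) (hf : ∀ k l, k ≠ l → q k → q l → f k ≠ f l) :
    Even (sgq σ q
      + ((univ.filter fun kl : Fin d × Fin d =>
          kl.1 < kl.2 ∧ q kl.1 ∧ q kl.2 ∧ ord.lt (f kl.2) (f kl.1)).card
        + (univ.filter fun kl : Fin d × Fin d =>
          kl.1 < kl.2 ∧ q (σ kl.1) ∧ q (σ kl.2) ∧ ord.lt (f (σ kl.2)) (f (σ kl.1))).card)) := by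
  set c1 := (univ.filter fun kl : Fin d × Fin d => kl.1 < kl.2 ∧ σ⁻¹ kl.1 < σ⁻¹ kl.2 ∧
    q kl.1 ∧ q kl.2 ∧ ord.lt (f kl.2) (f kl.1)) with hc1
  set c2 := (univ.filter fun kl : Fin d × Fin d => kl.1 < kl.2 ∧ σ⁻¹ kl.2 < σ⁻¹ kl.1 ∧
    q kl.1 ∧ q kl.2 ∧ ord.lt (f kl.1) (f kl.2)) with hc2
  set c3 := (univ.filter fun kl : Fin d × Fin d => kl.1 < kl.2 ∧ σ⁻¹ kl.2 < σ⁻¹ kl.1 ∧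
    q kl.1 ∧ q kl.2 ∧ ord.lt (f kl.2) (f kl.1)) with hc3
  have e1 : sgq σ q = c2.card + c3.card := by
    rw [sgq, ← Finset.card_union_of_disjoint]
    · congr 1
      ext ⟨k, l⟩
      simp only [hc2, hc3, mem_filter, mem_univ, true_and, mem_union]
      constructor
      · rintro ⟨h1, h2, h3, h4⟩
        rcases lt_trichotomy (f k) (f l) with h | h | h
        · exact Or.inl ⟨h1, h2, h3, h4, h⟩
        · exact absurd h (hf k l h1.ne h3 h4)
        · exact Or.inr ⟨h1, h2, h3, h4, h⟩
      · rintro (⟨h1, h2, h3, h4, -⟩ | ⟨h1, h2, h3, h4, -⟩) <;> exact ⟨h1, h2, h3, h4⟩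
    · rw [Finset.disjoint_left]
      rintro ⟨k, l⟩ h1 h2
      simp only [hc2, hc3, mem_filter, mem_univ, true_and] at h1 h2
      exact lt_asymm h1.2.2.2.2 h2.2.2.2.2
  have e2 : (univ.filter fun kl : Fin d × Fin d =>
      kl.1 < kl.2 ∧ q kl.1 ∧ q kl.2 ∧ ord.lt (f kl.2) (f kl.1)).card = c1.card + c3.card := by
    rw [← Finset.card_union_of_disjoint]
    · congr 1
      ext ⟨k, l⟩
      simp only [hc1, hc3, mem_filter, mem_univ, true_and, mem_union]
      constructor
      · rintro ⟨h1, h2, h3, h4⟩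
        rcases lt_trichotomy (σ⁻¹ k) (σ⁻¹ l) with h | h | h
        · exact Or.inl ⟨h1, h, h2, h3, h4⟩
        · exact absurd (σ⁻¹.injective h) h1.ne
        · exact Or.inr ⟨h1, h, h2, h3, h4⟩
      · rintro (⟨h1, h2, h3, h4, h5⟩ | ⟨h1, h2, h3, h4, h5⟩) <;> exact ⟨h1, h3, h4, h5⟩
    · rw [Finset.disjoint_left]
      rintro ⟨k, l⟩ h1 h2
      simp only [hc1, hc3, mem_filter, mem_univ, true_and] at h1 h2
      exact lt_asymm h1.2.1 h2.2.1
  have e3 : (univ.filter fun kl : Fin d × Fin d =>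
          kl.1 < kl.2 ∧ q (σ kl.1) ∧ q (σ kl.2) ∧ ord.lt (f (σ kl.2)) (f (σ kl.1))).card
      = c1.card + c2.card := by
    have i1 : (univ.filter fun kl : Fin d × Fin d =>
          kl.1 < kl.2 ∧ q (σ kl.1) ∧ q (σ kl.2) ∧ ord.lt (f (σ kl.2)) (f (σ kl.1)))
        = (c1.image fun kl => (σ⁻¹ kl.1, σ⁻¹ kl.2)) ∪ (c2.image fun kl => (σ⁻¹ kl.2, σ⁻¹ kl.1)) := by
      ext ⟨k, l⟩
      simp only [hc1, hc2, mem_filter, mem_univ, true_and, mem_union, mem_image, Prod.mk.injEq,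
        Prod.exists]
      constructor
      · rintro ⟨h1, h2, h3, h4⟩
        rcases lt_trichotomy (σ k) (σ l) with h | h | h
        · exact Or.inl ⟨σ k, σ l, ⟨h, by simpa using h1, h2, h3, h4⟩, by simp, by simp⟩
        · exact absurd (σ.injective h) h1.ne
        · exact Or.inr ⟨σ l, σ k, ⟨h, by simpa using h1, h3, h2, h4⟩, by simp, by simp⟩
      · rintro (⟨a, b, ⟨h1, h2, h3, h4, h5⟩, rfl, rfl⟩ | ⟨a, b, ⟨h1, h2, h3, h4, h5⟩, rfl, rfl⟩)
        · exact ⟨h2, by simpa using h3, by simpa using h4, by simpa using h5⟩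
        · exact ⟨h2, by simpa using h4, by simpa using h3, by simpa using h5⟩
    rw [i1, Finset.card_union_of_disjoint, Finset.card_image_of_injective,
      Finset.card_image_of_injective]
    · rintro ⟨a, b⟩ ⟨a', b'⟩ h
      simp only [Prod.mk.injEq, EmbeddingLike.apply_eq_iff_eq] at h
      rw [h.1, h.2]
    · rintro ⟨a, b⟩ ⟨a', b'⟩ h
      simp only [Prod.mk.injEq, EmbeddingLike.apply_eq_iff_eq] at h
      rw [h.1, h.2]
    · rw [Finset.disjoint_left]
      rintro ⟨k, l⟩ h1 h2
      simp only [hc1, hc2, mem_filter, mem_univ, true_and, mem_image, Prod.mk.injEq,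
        Prod.exists] at h1 h2
      obtain ⟨a, b, ⟨h3, -⟩, rfl, rfl⟩ := h1
      obtain ⟨a', b', ⟨h4, -⟩, h5, h6⟩ := h2
      rw [EmbeddingLike.apply_eq_iff_eq] at h5 h6
      subst h5 h6
      exact lt_asymm h3 h4
  rw [e1, e2, e3]
  exact ⟨c1.card + c2.card + c3.card, by ring⟩

/-! ### Parities and pure tensors -/

/-- The odd (`q` true) or even part of `A`. -/
def pr (P : GoodPair 𝕜 A β) (q : Prop) : Submodule 𝕜 A := if q then P.od else P.ev

theorem pr_homog {P : GoodPair 𝕜 A β} {q : Prop} {a : A} (h : a ∈ pr P q) : Homog P a := by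
  unfold pr at h
  split_ifs at h
  · exact Or.inr h
  · exact Or.inl h

theorem ev_od_zero (P : GoodPair 𝕜 A β) {a : A} (h1 : a ∈ P.ev) (h2 : a ∈ P.od) : a = 0 :=
  (Submodule.disjoint_def.1 P.compl.disjoint) a h1 h2

theorem pr_iff {P : GoodPair 𝕜 A β} {q : Prop} {a : A} (h : a ∈ pr P q) (h0 : a ≠ 0) :
    a ∈ P.od ↔ q := by
  unfold pr at h
  split_ifs at h with hq
  · exact ⟨fun _ => hq, fun _ => h⟩
  · exact ⟨fun h' => absurd (ev_od_zero P h h') h0, fun h' => absurd h' hq⟩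

theorem aa_le_span (P : GoodPair 𝕜 A β) {a : A} (ha : a ∈ P.aa) :
    a ∈ Submodule.span 𝕜 (P.bas '' {i | P.part i = 0}) := by
  have h1 : a ∈ Submodule.span 𝕜 (P.bas '' {i | P.part i = 0}) ⊔
      (Submodule.span 𝕜 (P.bas '' {i | P.part i = 1}) ⊔
        Submodule.span 𝕜 (P.bas '' {i | P.part i = 2})) := by
    rw [← Submodule.span_union, ← Submodule.span_union, ← Set.image_union, ← Set.image_union]
    have : ({i | P.part i = 0} ∪ ({i | P.part i = 1} ∪ {i | P.part i = 2})) = Set.univ := by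
      ext i
      simp only [Set.mem_union, Set.mem_ofPred_eq, Set.mem_univ, iff_true]
      generalize P.part i = x
      fin_cases x <;> simp
    rw [this, Set.image_univ, P.bas.span_eq]
    trivial
  obtain ⟨a0, h0, y, hy, rfl⟩ := Submodule.mem_sup.1 h1
  obtain ⟨a1, h1', a2, h2, rfl⟩ := Submodule.mem_sup.1 hy
  have m0 : a0 ∈ P.aa := by
    refine (Submodule.span_le.2 ?_) h0
    rintro _ ⟨i, hi, rfl⟩; exact P.bas_mem_aa i hi
  have m1 : a1 ∈ P.cc := by
    refine (Submodule.span_le.2 ?_) h1'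
    rintro _ ⟨i, hi, rfl⟩; exact P.bas_mem_cc i hi
  have m2 : a2 ∈ P.od := by
    refine (Submodule.span_le.2 ?_) h2
    rintro _ ⟨i, hi, rfl⟩; exact P.bas_mem_od i hi
  have m1' : a1 ∈ P.ev := by
    rw [← P.aa_sup_cc]; exact Submodule.mem_sup_right m1
  have z2 : a2 = 0 := by
    apply ev_od_zero P _ m2
    have := P.ev.sub_mem (P.ev.sub_mem (P.aa_le_ev ha) (P.aa_le_ev m0)) m1'
    convert this using 1
    abel
  subst z2
  have z1 : a1 = 0 := by
    have : a1 ∈ P.aa ⊓ P.cc := by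
      refine ⟨?_, m1⟩
      have := P.aa.sub_mem ha m0
      rwa [add_zero, add_sub_cancel_left] at this
    rw [P.aa_inf_cc] at this
    exact this
  subst z1
  simpa using h0

theorem bas_mem_pr (P : GoodPair 𝕜 A β) (i : β) : P.bas i ∈ pr P (P.part i = 2) := by
  unfold pr
  split_ifs with h
  · exact P.bas_mem_od i h
  · by_cases h0 : P.part i = 0
    · exact P.aa_le_ev (P.bas_mem_aa i h0)
    · have h1 : P.part i = 1 := by
        generalize P.part i = x at *
        fin_cases x <;> simp_all
      rw [← P.aa_sup_cc]
      exact Submodule.mem_sup_right (P.bas_mem_cc i h1)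

section Tensor

variable {P : GoodPair 𝕜 A β} (D : Tower 𝕜 A β n T P) {d : ℕ}

/-- The pure tensor as a multilinear map. -/
def XL (r s : Fin d → Fin n) : MultilinearMap 𝕜 (fun _ : Fin d => A) (T d) where
  toFun a := D.X a r s
  map_update_add' := by
    intro inst a k x y
    rw [Subsingleton.elim inst (instDecidableEqFin d)]
    exact D.X_update_add a r s k x y
  map_update_smul' := by
    intro inst a k c x
    rw [Subsingleton.elim inst (instDecidableEqFin d)]
    exact D.X_update_smul a r s k c x

theorem X_zero {a : Fin d → A} {r s : Fin d → Fin n} (k : Fin d) (h : a k = 0) : D.X a r s = 0 :=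
  (XL D r s).map_coord_zero k h

theorem X_mem_of_span (r s : Fin d → Fin n) (S : Fin d → Set A) (Q : Submodule 𝕜 (T d))
    (hQ : ∀ c : Fin d → A, (∀ k, c k ∈ S k) → D.X c r s ∈ Q)
    (c : Fin d → A) (hc : ∀ k, c k ∈ Submodule.span 𝕜 (S k)) : D.X c r s ∈ Q := by
  suffices h : ∀ (s' : Finset (Fin d)) (c : Fin d → A), (∀ k ∈ s', c k ∈ Submodule.span 𝕜 (S k)) →
      (∀ k, k ∉ s' → c k ∈ S k) → D.X c r s ∈ Q from
    h univ c (fun k _ => hc k) (fun k hk => absurd (mem_univ k) hk)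
  intro s'
  induction s' using Finset.induction_on with
  | empty => exact fun c _ h => hQ c fun k => h k (by simp)
  | insert k s' hk ih =>
    intro c h1 h2
    have : Submodule.span 𝕜 (S k) ≤ Q.comap ((XL D r s).toLinearMap c k) := by
      rw [Submodule.span_le]
      intro x hx
      change D.X (Function.update c k x) r s ∈ Q
      apply ih
      · intro l hl
        have : l ≠ k := fun h => hk (h ▸ hl)
        rw [Function.update_of_ne this]
        exact h1 l (mem_insert_of_mem hl)
      · intro l hl
        by_cases hlk : l = k
        · subst hlk; rw [Function.update_self]; exact hx
        · rw [Function.update_of_ne hlk]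
          exact h2 l (by simp [hlk, hl])
    have h3 := this (h1 k (mem_insert_self _ _))
    change D.X (Function.update c k (c k)) r s ∈ Q at h3
    rwa [Function.update_eq_self] at h3

theorem X_mul_q (a c : Fin d → A) (r s t u : Fin d → Fin n) (q q' : Fin d → Prop)
    (ha : ∀ k, a k ∈ pr P (q k)) (hc : ∀ k, c k ∈ pr P (q' k)) :
    D.X a r s * D.X c t u
      = if s = t then ((-1 : ℤ) ^ kzq q q') • D.X (fun k => a k * c k) r u else 0 := by
  by_cases h0 : ∃ k, a k = 0
  · obtain ⟨k, hk⟩ := h0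
    rw [X_zero D k hk, X_zero D k (a := fun k => a k * c k) (by simp [hk])]
    simp
  by_cases h1 : ∃ k, c k = 0
  · obtain ⟨k, hk⟩ := h1
    rw [X_zero D k hk, X_zero D k (a := fun k => a k * c k) (by simp [hk])]
    simp
  push Not at h0 h1
  rw [D.X_mul a c r s t u (fun k => pr_homog (ha k)) (fun k => pr_homog (hc k))]
  have : koz P.od a c = kzq q q' := by
    unfold koz kzq
    congr 1
    ext kl
    simp only [mem_filter, mem_univ, true_and, pr_iff (ha _) (h0 _), pr_iff (hc _) (h1 _)]
  rw [this]

theorem act_X_q (σ : Equiv.Perm (Fin d)) (a : Fin d → A) (r s : Fin d → Fin n) (q : Fin d → Prop)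
    (ha : ∀ k, a k ∈ pr P (q k)) :
    D.act σ (D.X a r s) = ((-1 : ℤ) ^ sgq σ q) • D.X (a ∘ σ) (r ∘ σ) (s ∘ σ) := by
  by_cases h0 : ∃ k, a k = 0
  · obtain ⟨k, hk⟩ := h0
    rw [X_zero D k hk, X_zero D (σ⁻¹ k) (a := a ∘ σ) (by simp [hk])]
    simp
  push Not at h0
  rw [D.act_X σ a r s fun k => pr_homog (ha k)]
  have : sgnc P.od σ a = sgq σ q := by
    unfold sgnc sgq
    congr 1
    ext kl
    simp only [mem_filter, mem_univ, true_and, pr_iff (ha _) (h0 _)]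
  rw [this]

/-! ### Pure tensors of matrices -/

/-- The pure tensor of a tuple of matrices. -/
def XM (m : Fin d → Matrix (Fin n) (Fin n) A) : T d :=
  ∑ r : Fin d → Fin n, ∑ s : Fin d → Fin n, D.X (fun k => m k (r k) (s k)) r s

/-- A matrix is homogeneous of the given parity. -/
def MH (P : GoodPair 𝕜 A β) (q : Prop) (m : Matrix (Fin n) (Fin n) A) : Prop :=
  ∀ r s, m r s ∈ pr P q

theorem XM_mul [∀ e, SMulCommClass 𝕜 (T e) (T e)] [∀ e, IsScalarTower 𝕜 (T e) (T e)]
    (m m' : Fin d → Matrix (Fin n) (Fin n) A) (q q' : Fin d → Prop)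
    (hm : ∀ k, MH P (q k) (m k)) (hm' : ∀ k, MH P (q' k) (m' k)) :
    XM D m * XM D m' = ((-1 : ℤ) ^ kzq q q') • XM D (fun k => m k * m' k) := by
  have e : XM D (fun k => m k * m' k) = ∑ r : Fin d → Fin n, ∑ u : Fin d → Fin n,
      ∑ s : Fin d → Fin n, D.X (fun k => m k (r k) (s k) * m' k (s k) (u k)) r u := by
    unfold XM
    refine Finset.sum_congr rfl fun r _ => Finset.sum_congr rfl fun u _ => ?_
    have := (XL D r u).map_sum (fun (k : Fin d) (t : Fin n) => m k (r k) t * m' k t (u k))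
    exact this
  rw [e]
  unfold XM
  rw [Finset.smul_sum, Finset.sum_mul]
  refine Finset.sum_congr rfl fun r _ => ?_
  have h1 : ∀ s t u : Fin d → Fin n, D.X (fun k => m k (r k) (s k)) r s
      * D.X (fun k => m' k (t k) (u k)) t u = if s = t then ((-1 : ℤ) ^ kzq q q') •
        D.X (fun k => m k (r k) (s k) * m' k (t k) (u k)) r u else 0 :=
    fun s t u => X_mul_q D _ _ r s t u q q' (fun k => hm k _ _) (fun k => hm' k _ _)
  rw [Finset.sum_comm (s := univ) (t := univ)
    (f := fun (u s : Fin d → Fin n) => D.X (fun k => m k (r k) (s k) * m' k (s k) (u k)) r u),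
    Finset.smul_sum, Finset.sum_mul]
  refine Finset.sum_congr rfl fun s _ => ?_
  rw [Finset.mul_sum, Finset.sum_eq_single s, Finset.mul_sum, Finset.smul_sum]
  · refine Finset.sum_congr rfl fun u _ => ?_
    rw [h1, if_pos rfl]
  · intro t _ hts
    rw [Finset.mul_sum]
    refine Finset.sum_eq_zero fun u _ => ?_
    rw [h1, if_neg hts.symm]
  · intro h; exact absurd (mem_univ _) h

theorem act_XM (σ : Equiv.Perm (Fin d)) (m : Fin d → Matrix (Fin n) (Fin n) A) (q : Fin d → Prop)
    (hm : ∀ k, MH P (q k) (m k)) :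
    D.act σ (XM D m) = ((-1 : ℤ) ^ sgq σ q) • XM D (m ∘ σ) := by
  unfold XM
  simp_rw [map_sum, Finset.smul_sum]
  have e : ∀ r s : Fin d → Fin n, D.act σ (D.X (fun k => m k (r k) (s k)) r s)
      = ((-1 : ℤ) ^ sgq σ q) • D.X (fun k => m (σ k) ((r ∘ σ) k) ((s ∘ σ) k)) (r ∘ σ) (s ∘ σ) :=
    fun r s => act_X_q D σ _ r s q (fun k => hm k _ _)
  simp_rw [e]
  have c : ∀ F : (Fin d → Fin n) → T d, ∑ r, F (r ∘ σ) = ∑ r, F r := fun F =>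
    Fintype.sum_equiv (σ.symm.arrowCongr (Equiv.refl _)) _ _ (fun r => by
      congr 1)
  rw [c (fun r => ∑ s : Fin d → Fin n, ((-1 : ℤ) ^ sgq σ q) •
    D.X (fun k => m (σ k) (r k) ((s ∘ σ) k)) r (s ∘ σ))]
  refine Finset.sum_congr rfl fun r _ => ?_
  exact c (fun s => ((-1 : ℤ) ^ sgq σ q) • D.X (fun k => m (σ k) (r k) (s k)) r s)

theorem XM_add (m : Fin d → Matrix (Fin n) (Fin n) A) (j : Fin d) (x y : Matrix (Fin n) (Fin n) A) :
    XM D (Function.update m j (x + y)) = XM D (Function.update m j x)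
      + XM D (Function.update m j y) := by
  unfold XM
  simp_rw [← Finset.sum_add_distrib]
  refine Finset.sum_congr rfl fun r _ => Finset.sum_congr rfl fun s _ => ?_
  have e : ∀ z : Matrix (Fin n) (Fin n) A, (fun k => Function.update m j z k (r k) (s k))
      = Function.update (fun k => m k (r k) (s k)) j (z (r j) (s j)) := by
    intro z; funext k
    by_cases h : k = j
    · subst h; simp
    · simp [h]
  rw [e, e, e, Matrix.add_apply, D.X_update_add]

theorem XM_smul (m : Fin d → Matrix (Fin n) (Fin n) A) (j : Fin d) (c : 𝕜)
    (x : Matrix (Fin n) (Fin n) A) :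
    XM D (Function.update m j (c • x)) = c • XM D (Function.update m j x) := by
  unfold XM
  simp_rw [Finset.smul_sum]
  refine Finset.sum_congr rfl fun r _ => Finset.sum_congr rfl fun s _ => ?_
  have e : ∀ z : Matrix (Fin n) (Fin n) A, (fun k => Function.update m j z k (r k) (s k))
      = Function.update (fun k => m k (r k) (s k)) j (z (r j) (s j)) := by
    intro z; funext k
    by_cases h : k = j
    · subst h; simp
    · simp [h]
  rw [e, e, Matrix.smul_apply, D.X_update_smul]

/-- The unit matrix. -/
def oneM (n : ℕ) (one : A) : Matrix (Fin n) (Fin n) A := Matrix.diagonal fun _ => one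

theorem insSlot_eq (one : A) (j : Fin d) (m : Matrix (Fin n) (Fin n) A) :
    insSlot D one j m = XM D (Function.update (fun _ => oneM n one) j m) := by
  unfold insSlot XM
  rw [← Fintype.sum_prod_type', Finset.sum_filter]
  refine Finset.sum_congr rfl ?_
  rintro ⟨r, s⟩ -
  split_ifs with h
  · congr 1
    funext k
    by_cases hk : k = j
    · subst hk; simp
    · simp only [if_neg hk, Function.update_of_ne hk, oneM]
      rw [show r k = s k from h k hk, Matrix.diagonal_apply_eq]
  · push Not at h
    obtain ⟨k, hk, hrs⟩ := h
    symm
    apply X_zero D k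
    simp only [Function.update_of_ne hk, oneM]
    exact Matrix.diagonal_apply_ne _ hrs

/-- `1^{⊗(d-1)} * m`. -/
def del (one : A) (d : ℕ) : Matrix (Fin n) (Fin n) A →ₗ[𝕜] T d where
  toFun m := ∑ j : Fin d, insSlot D one j m
  map_add' x y := by
    simp_rw [insSlot_eq, XM_add, Finset.sum_add_distrib]
  map_smul' c x := by
    simp_rw [insSlot_eq, XM_smul, ← Finset.smul_sum]
    rfl

end Tensor

/-! ### The norm map and orbit sums -/

section Norm

variable {P : GoodPair 𝕜 A β} (D : Tower 𝕜 A β n T P) {d : ℕ}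

/-- Sum over the symmetric group. -/
def Nm (d : ℕ) : T d →ₗ[𝕜] T d := ∑ σ : Equiv.Perm (Fin d), D.act σ

theorem Nm_apply (x : T d) : Nm D d x = ∑ σ : Equiv.Perm (Fin d), D.act σ x := by
  simp [Nm]

theorem Nm_act (τ : Equiv.Perm (Fin d)) (x : T d) : Nm D d (D.act τ x) = Nm D d x := by
  simp_rw [Nm_apply, D.act_act]
  exact Fintype.sum_equiv (Equiv.mulLeft τ) _ _ (fun σ => rfl)

theorem act_Nm (τ : Equiv.Perm (Fin d)) (x : T d) : D.act τ (Nm D d x) = Nm D d x := by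
  simp_rw [Nm_apply, map_sum, D.act_act]
  exact Fintype.sum_equiv (Equiv.mulRight τ) _ _ (fun σ => rfl)

theorem Nm_mul (x v : T d) (hv : v ∈ SchurS D d) : Nm D d x * v = Nm D d (x * v) := by
  simp_rw [Nm_apply, Finset.sum_mul, D.act_mul]
  exact Finset.sum_congr rfl fun σ _ => by rw [hv σ]

theorem Nm_inv (v : T d) (hv : v ∈ SchurS D d) :
    Nm D d v = Nat.card (⊤ : Subgroup (Equiv.Perm (Fin d))) • v := by
  rw [Nm_apply, Finset.sum_congr rfl (fun σ _ => hv σ), Finset.sum_const, Subgroup.card_top,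
    Nat.card_eq_fintype_card, Finset.card_univ]

/-- The index equivalence between words of triples and triples of words. -/
def wEq (β : Type) (n d : ℕ) :
    ((Fin d → β) × (Fin d → Fin n) × (Fin d → Fin n)) ≃ (Fin d → β × Fin n × Fin n) where
  toFun w k := (w.1 k, w.2.1 k, w.2.2 k)
  invFun w := (fun k => (w k).1, fun k => (w k).2.1, fun k => (w k).2.2)
  left_inv _ := rfl
  right_inv _ := rfl

/-- The basis of pure tensors indexed by words of triples. -/
def bW (d : ℕ) : Module.Basis (Fin d → β × Fin n × Fin n) 𝕜 (T d) := (D.bas d).reindex (wEq β n d)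

/-- The pure tensor of a word of basis triples. -/
def XW (w : Fin d → β × Fin n × Fin n) : T d :=
  D.X (fun k => P.bas (w k).1) (fun k => (w k).2.1) (fun k => (w k).2.2)

theorem bW_apply (w : Fin d → β × Fin n × Fin n) : bW D d w = XW D w := by
  rw [bW, Module.Basis.reindex_apply]
  exact D.bas_eq d _ _ _

theorem nsmul_cancel (D : Tower 𝕜 A β n T P) [IsDomain 𝕜] [CharZero 𝕜] {p : ℕ} (hp : p ≠ 0) {x y : T d}
    (h : p • x = p • y) : x = y := by
  apply (D.bas d).repr.injective
  ext i
  have := congrArg (fun z => (D.bas d).repr z i) h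
  simp only [map_nsmul, Finsupp.smul_apply, nsmul_eq_mul] at this
  exact mul_left_cancel₀ (Nat.cast_ne_zero.2 hp) this

/-- The positions of a word whose letters are not in `𝔞`. -/
def nonA (P : GoodPair 𝕜 A β) (w : Fin d → β × Fin n × Fin n) : Set (Fin d) :=
  {k | ¬ P.part (w k).1 = 0}

/-- `η` for a word of triples. -/
def etaW (ord : LinearOrder (A × Fin n × Fin n)) (w : Fin d → β × Fin n × Fin n) : T d :=
  eta D ord (fun k => (w k).1) (fun k => (w k).2.1) (fun k => (w k).2.2)

theorem card_StM_empty (w : Fin d → β × Fin n × Fin n)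
    (hw : IsTriB P (fun k => (w k).1) (fun k => (w k).2.1) (fun k => (w k).2.2)) :
    Nat.card (StM w ∅) = Nat.card (StM w (nonA P w)) *
      facSel (fun i => P.part i = 1) (fun k => (w k).1) (fun k => (w k).2.1)
        (fun k => (w k).2.2) := by
  have e1 : {k : Fin d | ¬ True} = (∅ : Set (Fin d)) := by ext; simp
  have h1 : Nat.card (StM w ∅) = ∏ v ∈ univ.image w,
      Nat.factorial (univ.filter fun k => w k = v).card := by
    have h := card_StM w (fun _ => True)
    rw [e1, Finset.filter_true] at h
    convert h
  have h2 : Nat.card (StM w (nonA P w)) = ∏ v ∈ (univ.image w).filter (fun v => P.part v.1 = 0),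
      Nat.factorial (univ.filter fun k => w k = v).card := by
    have h := card_StM w (fun v => P.part v.1 = 0)
    rw [nonA, h]
    congr!
  rw [h1, h2, ← Finset.prod_filter_mul_prod_filter_not (univ.image w)
    (fun v => P.part v.1 = 0)]
  congr 1
  symm
  unfold facSel mco
  apply Finset.prod_subset
  · intro v hv
    simp only [Finset.mem_filter] at hv ⊢
    obtain ⟨h3, h4⟩ := hv
    refine ⟨h3, ?_⟩
    rw [h4]; decide
  · intro v hv hv'
    obtain ⟨h3, h4⟩ := Finset.mem_filter.1 hv
    have h5 : P.part v.1 = 2 := by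
      have : ¬ P.part v.1 = 1 := fun h => hv' (by
        simp only [Finset.mem_filter]; exact ⟨h3, h⟩)
      generalize P.part v.1 = x at *
      fin_cases x <;> simp_all
    apply Nat.factorial_eq_one.2
    rw [Finset.card_le_one]
    intro a ha b hb
    by_contra hab
    have ha := (Finset.mem_filter.1 ha).2
    have hb := (Finset.mem_filter.1 hb).2
    refine hw a b hab (ha.trans hb.symm) ?_
    rw [← h5, ← ha]

theorem bas_od [Nontrivial 𝕜] (i : β) : P.bas i ∈ P.od ↔ P.part i = 2 :=
  pr_iff (bas_mem_pr P i) (P.bas.ne_zero i)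

theorem act_XW (σ : Equiv.Perm (Fin d)) (w : Fin d → β × Fin n × Fin n) :
    D.act σ (XW D w) = ((-1 : ℤ) ^ sgq σ fun k => P.part (w k).1 = 2) • XW D (w ∘ σ) :=
  act_X_q D σ _ _ _ _ fun _ => bas_mem_pr P _

theorem Nm_XW_tri [Nontrivial 𝕜] (ord : LinearOrder (A × Fin n × Fin n))
    (w : Fin d → β × Fin n × Fin n)
    (hw : IsTriB P (fun k => (w k).1) (fun k => (w k).2.1) (fun k => (w k).2.2)) :
    Nm D d (XW D w) = Nat.card (StM w (nonA P w)) • etaW D ord w := by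
  rw [etaW, eta, ← mul_smul, ← card_StM_empty w hw, xiB, xiH, Nm_apply]
  set g : Equiv.Perm (Fin d) → (Fin d → A) × (Fin d → Fin n) × (Fin d → Fin n) :=
    fun σ => ((fun k => P.bas (w k).1) ∘ σ, (fun k => (w k).2.1) ∘ σ, (fun k => (w k).2.2) ∘ σ)
    with hg
  set F : (Fin d → A) × (Fin d → Fin n) × (Fin d → Fin n) → T d := fun v =>
    ((-1 : ℤ) ^ (ang P.od ord (fun k => P.bas (w k).1) (fun k => (w k).2.1) (fun k => (w k).2.2)
      + ang P.od ord v.1 v.2.1 v.2.2)) • D.X v.1 v.2.1 v.2.2 with hF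
  have e1 : ∀ σ : Equiv.Perm (Fin d), D.act σ (XW D w) = F (g σ) := by
    intro σ
    rw [act_XW]
    simp only [hF, hg]
    have hE := sgq_ang ord σ (fun k => P.part (w k).1 = 2)
      (fun k => (P.bas (w k).1, (w k).2.1, (w k).2.2)) (by
        intro k l hkl hk _ h
        simp only [Prod.mk.injEq] at h
        exact hw k l hkl (Prod.ext (P.bas.injective h.1) (Prod.ext h.2.1 h.2.2)) hk)
    have hang : ∀ τ : Equiv.Perm (Fin d), ang P.od ord ((fun k => P.bas (w k).1) ∘ τ)
        ((fun k => (w k).2.1) ∘ τ) ((fun k => (w k).2.2) ∘ τ)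
        = (univ.filter fun kl : Fin d × Fin d =>
          kl.1 < kl.2 ∧ P.part (w (τ kl.1)).1 = 2 ∧ P.part (w (τ kl.2)).1 = 2 ∧
          ord.lt (P.bas (w (τ kl.2)).1, (w (τ kl.2)).2.1, (w (τ kl.2)).2.2)
            (P.bas (w (τ kl.1)).1, (w (τ kl.1)).2.1, (w (τ kl.1)).2.2)).card := by
      intro τ
      unfold ang
      congr 1
      ext kl
      simp only [mem_filter, mem_univ, true_and, Function.comp, bas_od]
    have h1 : ang P.od ord (fun k => P.bas (w k).1) (fun k => (w k).2.1) (fun k => (w k).2.2)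
        = (univ.filter fun kl : Fin d × Fin d =>
          kl.1 < kl.2 ∧ P.part (w kl.1).1 = 2 ∧ P.part (w kl.2).1 = 2 ∧
          ord.lt (P.bas (w kl.2).1, (w kl.2).2.1, (w kl.2).2.2)
            (P.bas (w kl.1).1, (w kl.1).2.1, (w kl.1).2.2)).card := hang 1
    have hE' : Even (sgq σ (fun k => P.part (w k).1 = 2)
        + (ang P.od ord (fun k => P.bas (w k).1) (fun k => (w k).2.1) (fun k => (w k).2.2)
        + ang P.od ord ((fun k => P.bas (w k).1) ∘ σ)
        ((fun k => (w k).2.1) ∘ σ) ((fun k => (w k).2.2) ∘ σ))) := by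
      rw [hang σ, h1]
      convert hE using 3
      all_goals congr 1; ext kl; simp only [mem_filter]
    have : ((-1 : ℤ) ^ sgq σ fun k => P.part (w k).1 = 2) = _ :=
      neg_one_pow_congr (Nat.even_add.1 hE')
    rw [this]
    rfl
  simp_rw [e1]
  rw [Finset.sum_comp F g, Finset.smul_sum]
  refine Finset.sum_congr rfl fun v hv => ?_
  obtain ⟨τ, -, rfl⟩ := Finset.mem_image.1 hv
  congr 1
  rw [← Fintype.card_subtype, ← Nat.card_eq_fintype_card]
  refine Nat.card_congr ⟨fun σ => ⟨σ.1 * τ⁻¹, ?_⟩, fun σ => ⟨σ.1 * τ, ?_⟩, ?_, ?_⟩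
  · obtain ⟨σ, hσ⟩ := σ
    refine ⟨by simp, fun k => ?_⟩
    simp only [hg, Prod.mk.injEq] at hσ
    have a1 := congrFun hσ.1 (τ⁻¹ k)
    have a2 := congrFun hσ.2.1 (τ⁻¹ k)
    have a3 := congrFun hσ.2.2 (τ⁻¹ k)
    simp only [Function.comp] at a1 a2 a3
    rw [show τ (τ⁻¹ k) = k by simp] at a1 a2 a3
    exact Prod.ext (P.bas.injective a1) (Prod.ext a2 a3)
  · obtain ⟨σ, -, hσ⟩ := σ
    simp only [hg, Prod.mk.injEq]
    refine ⟨?_, ?_, ?_⟩ <;> funext k <;> simp [hσ]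
  · intro σ; simp
  · intro σ; simp

theorem Nm_XW_not_tri [IsDomain 𝕜] [CharZero 𝕜]
    (w : Fin d → β × Fin n × Fin n)
    (hw : ¬ IsTriB P (fun k => (w k).1) (fun k => (w k).2.1) (fun k => (w k).2.2)) :
    Nm D d (XW D w) = 0 := by
  have : ∃ k l : Fin d, k < l ∧ w k = w l ∧ P.part (w k).1 = 2 := by
    unfold IsTriB at hw
    push Not at hw
    obtain ⟨k, l, h1, h2, h3⟩ := hw
    have h2' : w k = w l := h2
    rcases lt_or_gt_of_ne h1 with h | h
    · exact ⟨k, l, h, h2', h3⟩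
    · exact ⟨l, k, h, h2'.symm, h2' ▸ h3⟩
  obtain ⟨k, l, h1, h2, h3⟩ := this
  have h4 := sgq_swap (fun k => P.part (w k).1 = 2) k l h1 h3 (h2 ▸ h3)
  have h5 := Nm_act D (Equiv.swap k l) (XW D w)
  rw [act_XW, h4.neg_one_pow] at h5
  have h6 : w ∘ Equiv.swap k l = w := by
    funext m
    simp only [Function.comp, Equiv.swap_apply_def]
    split_ifs with a b
    · rw [a, h2]
    · rw [b, h2]
    · rfl
  rw [h6, neg_one_smul, map_neg] at h5
  apply nsmul_cancel D two_ne_zero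
  rw [two_nsmul, smul_zero]
  nth_rewrite 1 [← h5]
  simp

theorem Nm_XW [IsDomain 𝕜] [CharZero 𝕜] (ord : LinearOrder (A × Fin n × Fin n))
    (w : Fin d → β × Fin n × Fin n) :
    ∃ y ∈ SchurT D ord d, Nm D d (XW D w) = Nat.card (StM w (nonA P w)) • y := by
  by_cases hw : IsTriB P (fun k => (w k).1) (fun k => (w k).2.1) (fun k => (w k).2.2)
  · exact ⟨_, Submodule.subset_span ⟨_, _, _, hw, rfl⟩, Nm_XW_tri D ord w hw⟩
  · exact ⟨0, zero_mem _, by rw [Nm_XW_not_tri D w hw, smul_zero]⟩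

/-- The place permutation action of a group of permutations on words. -/
abbrev wordAction {γ : Type} (H : Subgroup (Equiv.Perm (Fin d))) : MulAction H (Fin d → γ) where
  smul h w := w ∘ ((h⁻¹ : H) : Equiv.Perm (Fin d))
  one_smul w := by
    change w ∘ (((1 : H)⁻¹ : H) : Equiv.Perm (Fin d)) = w
    simp
  mul_smul g h w := by
    change w ∘ (((g * h)⁻¹ : H) : Equiv.Perm (Fin d))
      = (w ∘ ((h⁻¹ : H) : Equiv.Perm (Fin d))) ∘ ((g⁻¹ : H) : Equiv.Perm (Fin d))
    rw [mul_inv_rev, Subgroup.coe_mul, Equiv.Perm.coe_mul]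
    rfl

/-- The key divisibility lemma. -/
theorem Nm_mem [IsDomain 𝕜] [CharZero 𝕜] (ord : LinearOrder (A × Fin n × Fin n))
    (H : Subgroup (Equiv.Perm (Fin d))) (z : T d) (hz : ∀ h ∈ H, D.act h z = z)
    (Ω : Set (Fin d → β × Fin n × Fin n))
    (hΩ : ∀ w ∈ Ω, ∀ h ∈ H, w ∘ h = w → ∀ k, P.part (w k).1 ≠ 0 → h k = k)
    (hzΩ : z ∈ Submodule.span 𝕜 (XW D '' Ω)) :
    ∃ y ∈ SchurT D ord d, Nm D d z = Nat.card H • y := by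
  let _ := wordAction (d := d) (γ := β × Fin n × Fin n) H
  have hsm : ∀ (h : H) (w : Fin d → β × Fin n × Fin n),
    h • w = w ∘ ((h⁻¹ : H) : Equiv.Perm (Fin d)) := fun _ _ => rfl
  set c := (bW D d).repr z with hc
  have e0 : z = ∑ w ∈ c.support, c w • XW D w := by
    have := (bW D d).linearCombination_repr z
    rw [Finsupp.linearCombination_apply, Finsupp.sum] at this
    rw [← this]
    simp_rw [bW_apply]
    rfl
  have hsupp : ∀ w ∈ c.support, w ∈ Ω := by
    have h1 : (XW D (d := d)) '' Ω = bW D d '' Ω :=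
      Set.image_congr fun w _ => (bW_apply D w).symm
    rw [h1, Module.Basis.mem_span_image] at hzΩ
    intro w hw
    exact hzΩ hw
  -- equivariance of coefficients
  have hcoef : ∀ h ∈ H, ∀ w, c (w ∘ h) = ((-1 : ℤ) ^ sgq h fun k => P.part (w k).1 = 2) • c w := by
    intro h hh w
    have key : ∀ x : T d, (bW D d).repr (D.act h x) (w ∘ h)
        = ((-1 : ℤ) ^ sgq h fun k => P.part (w k).1 = 2) • (bW D d).repr x w := by
      intro x
      have hl : ((bW D d).coord (w ∘ h)).comp (D.act h)
          = ((-1 : ℤ) ^ sgq h fun k => P.part (w k).1 = 2) • (bW D d).coord w := by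
        apply (bW D d).ext
        intro v
        simp only [LinearMap.comp_apply, bW_apply, act_XW, map_zsmul, LinearMap.smul_apply]
        rw [← bW_apply, ← bW_apply]
        simp only [Module.Basis.coord_apply, Module.Basis.repr_self]
        by_cases hvw : v = w
        · subst hvw
          simp
        · have : v ∘ h ≠ w ∘ h := fun e => hvw (h.surjective.injective_comp_right e)
          rw [Finsupp.single_eq_of_ne this.symm, Finsupp.single_eq_of_ne (Ne.symm hvw)]
          simp
      exact LinearMap.congr_fun hl x
    have := key z
    rw [hz h hh] at this
    exact this
  set φ : (Fin d → β × Fin n × Fin n) → T d := fun w => c w • Nm D d (XW D w) with hφ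
  have e1 : Nm D d z = ∑ w ∈ c.support, φ w := by
    conv_lhs => rw [e0]
    simp only [map_sum, map_smul, hφ]
  have hinv : ∀ (h : H) w, φ (h • w) = φ w := by
    intro h w
    simp only [hφ, hsm]
    rw [hcoef _ (h⁻¹).2, ← Nm_act D ((h⁻¹ : H) : Equiv.Perm (Fin d)) (XW D w), act_XW, map_zsmul]
    rw [smul_assoc, smul_comm]
  rw [e1]
  have := orbit_sum (G := H) (SchurT D ord d).toAddSubmonoid c.support ?_ φ hinv ?_
  · exact this
  · intro h w hw
    rw [Finsupp.mem_support_iff] at hw ⊢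
    intro h0
    apply hw
    rw [hsm, hcoef _ (h⁻¹).2] at h0
    rcases neg_one_pow_eq_or ℤ (sgq ((h⁻¹ : H) : Equiv.Perm (Fin d)) fun k => P.part (w k).1 = 2)
      with e | e
    · rw [e, one_smul] at h0; exact h0
    · rw [e, neg_one_smul, neg_eq_zero] at h0; exact h0
  · intro w hw
    obtain ⟨y, hy, hy2⟩ := Nm_XW D ord w
    have hdvd : Nat.card (MulAction.stabilizer H w) ∣ Nat.card (StM w (nonA P w)) := by
      apply card_dvd_of_coe
      intro h hh
      rw [MulAction.mem_stabilizer_iff, hsm] at hh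
      have hh' : w ∘ (h : Equiv.Perm (Fin d)) = w := by
        conv_lhs => rw [← hh]
        funext k
        simp
      exact ⟨fun k hk => hΩ w (hsupp w hw) h h.2 hh' k hk, fun k => congrFun hh' k⟩
    obtain ⟨p, hp⟩ := hdvd
    refine ⟨c w • (p • y), (SchurT D ord d).smul_mem _ (nsmul_mem hy p), ?_⟩
    simp only [hφ]
    rw [hy2, hp, mul_smul, smul_comm]

end Norm

/-! ### Closure of `SchurT` under right multiplication by the generators -/

section Closure

variable {P : GoodPair 𝕜 A β} (D : Tower 𝕜 A β n T P) {d : ℕ}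

theorem X_span (I : Set (Fin d)) (c : Fin d → A) (r s : Fin d → Fin n)
    (hc : ∀ k ∈ I, c k ∈ P.aa) :
    D.X c r s ∈ Submodule.span 𝕜 (XW D '' {w | ∀ k ∈ I, P.part (w k).1 = 0}) := by
  refine X_mem_of_span D r s
    (fun k => if k ∈ I then P.bas '' {i | P.part i = 0} else Set.range P.bas) _ ?_ c ?_
  · intro c hc
    have : ∀ k, ∃ i, P.bas i = c k ∧ (k ∈ I → P.part i = 0) := by
      intro k
      have := hc k
      split_ifs at this with h
      · obtain ⟨i, hi, e⟩ := this
        exact ⟨i, e, fun _ => hi⟩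
      · obtain ⟨i, e⟩ := this
        exact ⟨i, e, fun h' => absurd h' h⟩
    choose i hi hi2 using this
    refine Submodule.subset_span ⟨fun k => (i k, r k, s k), fun k hk => hi2 k hk, ?_⟩
    simp only [XW, hi]
  · intro k
    split_ifs with h
    · exact aa_le_span P (hc k h)
    · rw [P.bas.span_eq]; trivial

theorem XM_span (I : Set (Fin d)) (m : Fin d → Matrix (Fin n) (Fin n) A)
    (hm : ∀ k ∈ I, ∀ r s, m k r s ∈ P.aa) :
    XM D m ∈ Submodule.span 𝕜 (XW D '' {w | ∀ k ∈ I, P.part (w k).1 = 0}) :=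
  sum_mem fun _ _ => sum_mem fun _ _ => X_span D I _ _ _ fun k hk => hm k hk _ _

/-- The matrix unit attached to a basis triple. -/
def sgl (P : GoodPair 𝕜 A β) (v : β × Fin n × Fin n) : Matrix (Fin n) (Fin n) A :=
  Matrix.single v.2.1 v.2.2 (P.bas v.1)

theorem sgl_MH (v : β × Fin n × Fin n) : MH P (P.part v.1 = 2) (sgl P v) := by
  intro r s
  rw [sgl, Matrix.single_apply]
  split_ifs
  · exact bas_mem_pr P _
  · exact zero_mem _

theorem sgl_aa (v : β × Fin n × Fin n) (h : P.part v.1 = 0) (r s : Fin n) :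
    sgl P v r s ∈ P.aa := by
  rw [sgl, Matrix.single_apply]
  split_ifs
  · exact P.bas_mem_aa _ h
  · exact zero_mem _

theorem MH_of_aa {m : Matrix (Fin n) (Fin n) A} (h : ∀ r s, m r s ∈ P.aa) : MH P False m := by
  intro r s
  rw [pr, if_neg not_false]
  exact P.aa_le_ev (h r s)

theorem oneM_aa {one : A} (h : one ∈ P.aa) (r s : Fin n) : oneM n one r s ∈ P.aa := by
  rw [oneM, Matrix.diagonal_apply]
  split_ifs
  · exact h
  · exact zero_mem _

theorem XW_eq_XM (w : Fin d → β × Fin n × Fin n) : XW D w = XM D (fun k => sgl P (w k)) := by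
  unfold XM
  rw [Finset.sum_eq_single (fun k => (w k).2.1), Finset.sum_eq_single (fun k => (w k).2.2)]
  · simp [XW, sgl]
  · intro s _ hs
    obtain ⟨k, hk⟩ := Function.ne_iff.1 hs
    apply X_zero D k
    refine (Matrix.single_apply _ _ _ _ _).trans (if_neg ?_)
    exact fun h => hk h.2.symm
  · simp
  · intro r _ hr
    obtain ⟨k, hk⟩ := Function.ne_iff.1 hr
    apply Finset.sum_eq_zero
    intro s _
    apply X_zero D k
    refine (Matrix.single_apply _ _ _ _ _).trans (if_neg ?_)
    exact fun h => hk h.1.symm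
  · simp

theorem sgl_span (m : Matrix (Fin n) (Fin n) A) :
    m ∈ Submodule.span 𝕜 (Set.range (sgl (n := n) P)) := by
  rw [Matrix.matrix_eq_sum_single m]
  refine sum_mem fun r _ => sum_mem fun s _ => ?_
  generalize m r s = a
  have : a ∈ Submodule.span 𝕜 (Set.range P.bas) := by rw [P.bas.span_eq]; trivial
  induction this using Submodule.span_induction with
  | mem x hx =>
    obtain ⟨i, rfl⟩ := hx
    exact Submodule.subset_span ⟨(i, r, s), rfl⟩
  | zero => rw [Matrix.single_zero]; exact zero_mem _
  | add x y _ _ hx hy => rw [Matrix.single_add]; exact add_mem hx hy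
  | smul c x _ hx => rw [← Matrix.smul_single]; exact Submodule.smul_mem _ _ hx

theorem act_ins {one : A} (h1 : one ∈ P.aa) (σ : Equiv.Perm (Fin d)) (j : Fin d) (q : Prop)
    (m : Matrix (Fin n) (Fin n) A) (hm : MH P q m) :
    D.act σ (insSlot D one j m) = insSlot D one (σ⁻¹ j) m := by
  rw [insSlot_eq, insSlot_eq, act_XM D σ _ (fun k => k = j ∧ q),
    sgq_single σ _ j (fun k hk => hk.1), pow_zero, one_smul, Function.update_comp_equiv]
  · rfl
  · intro k
    by_cases h : k = j
    · subst h
      simpa using hm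
    · rw [Function.update_of_ne h]
      simpa [h] using MH_of_aa (oneM_aa (P := P) h1)

theorem del_apply (one : A) (m : Matrix (Fin n) (Fin n) A) :
    del D one d m = ∑ j : Fin d, insSlot D one j m := rfl

theorem del_mem_S {one : A} (h1 : one ∈ P.aa) (m : Matrix (Fin n) (Fin n) A) :
    del D one d m ∈ SchurS D d := by
  induction sgl_span (P := P) m using Submodule.span_induction with
  | mem x hx =>
    obtain ⟨v, rfl⟩ := hx
    intro σ
    rw [del_apply, map_sum]
    simp_rw [act_ins D h1 σ _ _ _ (sgl_MH v)]
    exact Equiv.sum_comp σ⁻¹ fun j => insSlot D one j (sgl P v)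
  | zero => rw [map_zero]; exact zero_mem _
  | add x y _ _ hx hy => rw [map_add]; exact add_mem hx hy
  | smul c x _ hx => rw [map_smul]; exact Submodule.smul_mem _ _ hx

section alg
set_option linter.unusedSectionVars false
variable [∀ e, SMulCommClass 𝕜 (T e) (T e)] [∀ e, IsScalarTower 𝕜 (T e) (T e)]

theorem mul_oneM {one : A} (hone : ∀ a : A, one * a = a ∧ a * one = a)
    (m : Matrix (Fin n) (Fin n) A) : m * oneM n one = m := by
  ext r s
  rw [oneM, Matrix.mul_diagonal, (hone _).2]

theorem oneM_mul {one : A} (hone : ∀ a : A, one * a = a ∧ a * one = a)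
    (m : Matrix (Fin n) (Fin n) A) : oneM n one * m = m := by
  ext r s
  rw [oneM, Matrix.diagonal_mul, (hone _).1]

theorem XM_ins {one : A} (h1 : one ∈ P.aa) (hone : ∀ a : A, one * a = a ∧ a * one = a)
    (w : Fin d → Matrix (Fin n) (Fin n) A) (q : Fin d → Prop) (hw : ∀ k, MH P (q k) (w k))
    (j : Fin d) (q' : Prop) (m : Matrix (Fin n) (Fin n) A) (hm : MH P q' m) :
    XM D w * insSlot D one j m
      = ((-1 : ℤ) ^ kzq q (fun k => k = j ∧ q')) • XM D (Function.update w j (w j * m)) := by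
  rw [insSlot_eq, XM_mul D _ _ q (fun k => k = j ∧ q') hw]
  · congr 2
    funext k
    by_cases h : k = j
    · subst h; simp
    · rw [Function.update_of_ne h, Function.update_of_ne h, mul_oneM hone]
  · intro k
    by_cases h : k = j
    · subst h
      simpa using hm
    · rw [Function.update_of_ne h]
      simpa [h] using MH_of_aa (oneM_aa (P := P) h1)

/-- The unit of the tensor algebra. -/
def oneT (one : A) (d : ℕ) : T d := XM D (fun _ : Fin d => oneM n one)

theorem oneT_mem {one : A} (h1 : one ∈ P.aa) : oneT D one d ∈ SchurA D d := by
  refine ⟨sum_mem fun r _ => sum_mem fun s _ =>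
    Submodule.subset_span ⟨_, _, _, fun k => oneM_aa h1 _ _, rfl⟩, fun σ => ?_⟩
  rw [oneT, act_XM D σ _ (fun _ => False) (fun k => MH_of_aa (oneM_aa h1)),
    sgq_eq_zero _ _ (fun _ h => h.elim), pow_zero, one_smul]
  rfl

theorem oneT_mul {one : A} (h1 : one ∈ P.aa) (hone : ∀ a : A, one * a = a ∧ a * one = a)
    (x : T d) : oneT D one d * x = x := by
  have : LinearMap.mulLeft 𝕜 (oneT D one d) = LinearMap.id := by
    apply (bW D d).ext
    intro w
    rw [bW_apply, XW_eq_XM, LinearMap.mulLeft_apply, LinearMap.id_apply, oneT,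
      XM_mul D _ _ (fun _ => False) _ (fun k => MH_of_aa (oneM_aa h1)) (fun k => sgl_MH (w k))]
    simp_rw [oneM_mul hone]
    have : kzq (fun _ : Fin d => False) (fun k => P.part (w k).1 = 2) = 0 := by
      simp [kzq]
    rw [this, pow_zero, one_smul]
  exact LinearMap.congr_fun this x

variable [IsDomain 𝕜] [CharZero 𝕜] (ord : LinearOrder (A × Fin n × Fin n))

theorem card_ne {G : Type} [Group G] [Finite G] (H : Subgroup G) : Nat.card H ≠ 0 :=
  Nat.card_pos.ne'

theorem SchurA_le : SchurA D d ≤ SchurT D ord d := by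
  rintro v ⟨h1, h2⟩
  obtain ⟨y, hy, e⟩ := Nm_mem D ord ⊤ v (fun h _ => h2 h) {w | ∀ k ∈ Set.univ, P.part (w k).1 = 0}
    (fun w hw h _ _ k hk => absurd (hw k trivial) hk) (by
      refine Submodule.span_le.2 ?_ h1
      rintro _ ⟨a, r, s, ha, rfl⟩
      exact X_span D _ _ _ _ fun k _ => ha k)
  rw [Nm_inv D v h2] at e
  rw [nsmul_cancel D (card_ne _) e]
  exact hy

theorem mul_key (w : Fin d → β × Fin n × Fin n)
    (hw : IsTriB P (fun k => (w k).1) (fun k => (w k).2.1) (fun k => (w k).2.2))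
    (v : T d) (hv : v ∈ SchurS D d) (Ω : Set (Fin d → β × Fin n × Fin n))
    (hΩ : ∀ w' ∈ Ω, ∀ h ∈ StM w (nonA P w), w' ∘ h = w' → ∀ k, P.part (w' k).1 ≠ 0 → h k = k)
    (hz : XW D w * v ∈ Submodule.span 𝕜 (XW D '' Ω)) : etaW D ord w * v ∈ SchurT D ord d := by
  obtain ⟨y, hy, e⟩ := Nm_mem D ord (StM w (nonA P w)) (XW D w * v) (by
    intro h hh
    have hh' := (mem_StM).1 hh
    rw [D.act_mul, hv h, act_XW, sgq_eq_zero, pow_zero, one_smul]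
    · congr 2
      funext k
      exact hh'.2 k
    · intro k hk
      refine hh'.1 k ?_
      change ¬ P.part (w k).1 = 0
      rw [hk]
      decide) Ω hΩ hz
  rw [← Nm_mul D _ _ hv, Nm_XW_tri D ord w hw, smul_mul_assoc] at e
  rw [nsmul_cancel D (card_ne _) e]
  exact hy

theorem mul_reduce (v : T d)
    (h : ∀ w : Fin d → β × Fin n × Fin n,
      IsTriB P (fun k => (w k).1) (fun k => (w k).2.1) (fun k => (w k).2.2) →
      etaW D ord w * v ∈ SchurT D ord d) (t : T d) (ht : t ∈ SchurT D ord d) :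
    t * v ∈ SchurT D ord d := by
  have ht' := ht
  unfold SchurT at ht'
  induction ht' using Submodule.span_induction with
  | mem x hx =>
    obtain ⟨b, r, s, hb, rfl⟩ := hx
    exact h (fun k => (b k, r k, s k)) hb
  | zero => rw [zero_mul]; exact zero_mem _
  | add x y h1 h2 hx hy => rw [add_mul]; exact add_mem (hx h1) (hy h2)
  | smul c x h1 hx => rw [smul_mul_assoc]; exact Submodule.smul_mem _ _ (hx h1)

theorem mul_SchurA (v : T d) (hv : v ∈ SchurA D d) (t : T d) (ht : t ∈ SchurT D ord d) :
    t * v ∈ SchurT D ord d := by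
  refine mul_reduce D ord v (fun w hw => ?_) t ht
  refine mul_key D ord w hw v hv.2 {w' | ∀ k ∈ (nonA P w)ᶜ, P.part (w' k).1 = 0} ?_ ?_
  · intro w' hw' h hh _ k hk
    apply ((mem_StM).1 hh).1
    by_contra hn
    exact hk (hw' k hn)
  · have h1 := hv.1
    clear hv
    induction h1 using Submodule.span_induction with
    | mem x hx =>
      obtain ⟨a, r, s, ha, rfl⟩ := hx
      rw [XW, X_mul_q D _ _ _ _ _ _ _ (fun _ => False) (fun k => bas_mem_pr P _)
        (fun k => by rw [pr, if_neg not_false]; exact P.aa_le_ev (ha k))]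
      split_ifs
      · apply zsmul_mem
        apply X_span
        intro k hk
        refine P.aa_mul _ (P.bas_mem_aa _ ?_) _ (ha k)
        by_contra hn
        exact hk hn
      · exact zero_mem _
    | zero => rw [mul_zero]; exact zero_mem _
    | add x y h1 h2 hx hy => rw [mul_add]; exact add_mem hx hy
    | smul c x h1 hx => rw [mul_smul_comm]; exact Submodule.smul_mem _ _ hx

theorem mul_del {one : A} (h1 : one ∈ P.aa) (hone : ∀ a : A, one * a = a ∧ a * one = a)
    (m : Matrix (Fin n) (Fin n) A) (t : T d) (ht : t ∈ SchurT D ord d) :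
    t * del D one d m ∈ SchurT D ord d := by
  induction sgl_span (P := P) m using Submodule.span_induction with
  | zero => rw [map_zero, mul_zero]; exact zero_mem _
  | add x y _ _ hx hy => rw [map_add, mul_add]; exact add_mem hx hy
  | smul c x _ hx => rw [map_smul, mul_smul_comm]; exact Submodule.smul_mem _ _ hx
  | mem x hx =>
    obtain ⟨v, rfl⟩ := hx
    refine mul_reduce D ord _ (fun w hw => ?_) t ht
    refine mul_key D ord w hw _ (del_mem_S D h1 _)
      {w' | ∃ j, ∀ k ∈ {k | k ∉ nonA P w ∧ k ≠ j}, P.part (w' k).1 = 0} ?_ ?_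
    · rintro w' ⟨j, hj⟩ h hh hw' k hk
      have hh' := ((mem_StM).1 hh).1
      by_cases hkn : k ∈ nonA P w
      · exact hh' k hkn
      · have hkj : k = j := by
          by_contra hn
          exact hk (hj k ⟨hkn, hn⟩)
        by_cases hhk : h k ∈ nonA P w
        · exact h.injective (hh' _ hhk)
        · by_contra hn
          apply hk
          rw [← congrFun hw' k]
          exact hj (h k) ⟨hhk, hkj ▸ hn⟩
    · rw [del_apply, Finset.mul_sum]
      refine sum_mem fun j _ => ?_
      rw [XW_eq_XM, XM_ins D h1 hone _ _ (fun k => sgl_MH (w k)) j _ _ (sgl_MH v)]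
      apply zsmul_mem
      refine Submodule.span_mono (Set.image_mono ?_)
        (XM_span D {k | k ∉ nonA P w ∧ k ≠ j} _ ?_)
      · intro w' hw'
        exact ⟨j, hw'⟩
      · rintro k ⟨hk1, hk2⟩ r s
        rw [Function.update_of_ne hk2]
        apply sgl_aa
        by_contra hn
        exact hk1 hn

theorem adjoin_le {one : A} (h1 : one ∈ P.aa) (hone : ∀ a : A, one * a = a ∧ a * one = a)
    (x : T d) (hx : x ∈ NonUnitalAlgebra.adjoin 𝕜 ((SchurA D d : Set (T d)) ∪
        {x | ∃ m : Matrix (Fin n) (Fin n) A, x = ∑ j : Fin d, insSlot D one j m})) :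
    x ∈ SchurT D ord d := by
  rw [← oneT_mul D h1 hone x]
  have key : ∀ t ∈ SchurT D ord d, t * x ∈ SchurT D ord d := by
    induction hx using NonUnitalAlgebra.adjoin_induction with
    | mem x hx =>
      rcases hx with hx | ⟨m, rfl⟩
      · exact mul_SchurA D ord x hx
      · exact mul_del D ord h1 hone m
    | add x y _ _ hx hy => intro t ht; rw [mul_add]; exact add_mem (hx t ht) (hy t ht)
    | zero => intro t ht; rw [mul_zero]; exact zero_mem _
    | mul x y _ _ hx hy => intro t ht; rw [← mul_assoc]; exact hy _ (hx _ ht)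
    | smul c x _ hx => intro t ht; rw [mul_smul_comm]; exact Submodule.smul_mem _ _ (hx t ht)
  exact key _ (SchurA_le D ord (oneT_mem D h1))

end alg

end Closure

/-! ### Generation -/

section Generation
set_option linter.unusedSectionVars false

variable {P : GoodPair 𝕜 A β} (D : Tower 𝕜 A β n T P) {d : ℕ}
variable [∀ e, SMulCommClass 𝕜 (T e) (T e)] [∀ e, IsScalarTower 𝕜 (T e) (T e)]
variable [IsDomain 𝕜] [CharZero 𝕜]

theorem pr_mul {q q' : Prop} {a b : A} (ha : a ∈ pr P q) (hb : b ∈ pr P q') :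
    a * b ∈ pr P (Xor q q') := by
  unfold pr at *
  by_cases h : q <;> by_cases h' : q' <;> simp only [h, h', if_true, if_false] at ha hb <;>
    simp [Xor, h, h']
  · exact P.mul_oo _ ha _ hb
  · exact P.mul_oe _ ha _ hb
  · exact P.mul_eo _ ha _ hb
  · exact P.mul_ee _ ha _ hb

theorem MH_mul {q q' : Prop} {m m' : Matrix (Fin n) (Fin n) A} (hm : MH P q m)
    (hm' : MH P q' m') : MH P (Xor q q') (m * m') := by
  intro r s
  rw [Matrix.mul_apply]
  exact sum_mem fun k _ => pr_mul (hm _ _) (hm' _ _)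

theorem gen_base (w : Fin d → Matrix (Fin n) (Fin n) A) (hw : ∀ k r s, w k r s ∈ P.aa) :
    ∃ z ∈ SchurA D d, Nm D d (XM D w) = Nat.card (StM w ∅) • z := by
  have e1 : ∀ σ : Equiv.Perm (Fin d), D.act σ (XM D w) = XM D (w ∘ σ) := by
    intro σ
    rw [act_XM D σ _ (fun _ => False) (fun k => MH_of_aa (hw k)),
      sgq_eq_zero _ _ (fun _ h => h.elim), pow_zero, one_smul]
  have e2 : Nm D d (XM D w) = Nat.card (StM w ∅) •
      ∑ v ∈ univ.image (fun σ : Equiv.Perm (Fin d) => w ∘ σ), XM D v := by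
    rw [Nm_apply]
    simp_rw [e1]
    rw [Finset.sum_comp (XM D) (fun σ : Equiv.Perm (Fin d) => w ∘ σ), Finset.smul_sum]
    refine Finset.sum_congr rfl fun v hv => ?_
    obtain ⟨τ, -, rfl⟩ := Finset.mem_image.1 hv
    congr 1
    rw [← Fintype.card_subtype, ← Nat.card_eq_fintype_card]
    refine Nat.card_congr ⟨fun σ => ⟨σ.1 * τ⁻¹, ?_⟩, fun σ => ⟨σ.1 * τ, ?_⟩, ?_, ?_⟩
    · obtain ⟨σ, hσ⟩ := σ
      refine ⟨by simp, fun k => ?_⟩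
      have a1 := congrFun hσ (τ⁻¹ k)
      simp only [Function.comp] at a1
      rw [show τ (τ⁻¹ k) = k by simp] at a1
      exact a1
    · obtain ⟨σ, -, hσ⟩ := σ
      funext k
      simp [hσ]
    · intro σ; simp
    · intro σ; simp
  refine ⟨_, ⟨sum_mem fun v hv => ?_, fun τ => ?_⟩, e2⟩
  · obtain ⟨τ, -, rfl⟩ := Finset.mem_image.1 hv
    exact sum_mem fun r _ => sum_mem fun s _ =>
      Submodule.subset_span ⟨_, _, _, fun k => hw _ _ _, rfl⟩
  · apply nsmul_cancel D (card_ne (StM w ∅))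
    rw [← map_nsmul, ← e2, act_Nm]

theorem gen_claim {one : A} (h1 : one ∈ P.aa) (hone : ∀ a : A, one * a = a ∧ a * one = a)
    (Q : Submodule 𝕜 (T d)) (hA : SchurA D d ≤ Q) (hQ : ∀ z ∈ Q, ∀ m, z * del D one d m ∈ Q) :
    ∀ (N1 N2 : ℕ) (M : Finset (Fin d)) (w : Fin d → Matrix (Fin n) (Fin n) A) (q : Fin d → Prop),
      M.card = N1 → (univ.filter fun k => k ∉ M ∧ w k ≠ oneM n one).card = N2 →
      (∀ k, MH P (q k) (w k)) → (∀ k, q k → k ∈ M) → (∀ k, k ∉ M → ∀ r s, w k r s ∈ P.aa) →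
      ∃ z ∈ Q, Nm D d (XM D w) = Nat.card (StM w (M : Set (Fin d))) • z := by
  intro N1
  induction N1 with
  | zero =>
    intro N2 M w q hM _ _ _ hw
    obtain rfl := Finset.card_eq_zero.1 hM
    obtain ⟨z, hz, e⟩ := gen_base D w (fun k => hw k (by simp))
    exact ⟨z, hA hz, by rw [e, Finset.coe_empty]⟩
  | succ N1 ih1 =>
  intro N2
  induction N2 using Nat.strong_induction_on with
  | _ N2 ih2 =>
  intro M w q hM hN2 hMH hqM hw
  obtain ⟨j0, hj0⟩ : M.Nonempty := by
    rw [← Finset.card_pos]; omega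
  set y := w j0 with hy
  set w' := Function.update w j0 (oneM n one) with hw'def
  set M' := M.erase j0 with hM'
  set q' : Fin d → Prop := fun k => k ≠ j0 ∧ q k with hq'
  have hM'c : M'.card = N1 := by rw [hM', Finset.card_erase_of_mem hj0]; omega
  have hw'j0 : w' j0 = oneM n one := by simp [hw'def]
  have hw'ne : ∀ k, k ≠ j0 → w' k = w k := fun k hk => by simp [hw'def, hk]
  have hMH' : ∀ k, MH P (q' k) (w' k) := by
    intro k
    by_cases h : k = j0
    · subst h
      rw [hw'j0]
      simpa [hq'] using MH_of_aa (oneM_aa (P := P) h1)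
    · rw [hw'ne k h]
      simpa [hq', h] using hMH k
  have hqM' : ∀ k, q' k → k ∈ M' := fun k hk => Finset.mem_erase.2 ⟨hk.1, hqM k hk.2⟩
  have hw'aa : ∀ k, k ∉ M' → ∀ r s, w' k r s ∈ P.aa := by
    intro k hk r s
    by_cases h : k = j0
    · subst h
      rw [hw'j0]
      exact oneM_aa h1 r s
    · rw [hw'ne k h]
      exact hw k (fun hkM => hk (Finset.mem_erase.2 ⟨h, hkM⟩)) r s
  set H := StM w' (M' : Set (Fin d)) with hH
  obtain ⟨z, hz, ez⟩ := ih1 _ M' w' q' hM'c rfl hMH' hqM' hw'aa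
  set f : Fin d → T d := fun j => Nm D d (XM D w' * insSlot D one j y) with hf
  have hyMH : MH P (q j0) y := hMH j0
  have hHfix : ∀ h ∈ H, D.act h (XM D w') = XM D w' := by
    intro h hh
    have hh' := mem_StM.1 hh
    rw [act_XM D h _ q' hMH', sgq_eq_zero, pow_zero, one_smul]
    · congr 1
      funext k
      exact hh'.2 k
    · exact fun k hk => hh'.1 k (hqM' k hk)
  have hfinv : ∀ (h : H) (j : Fin d), f (h • j) = f j := by
    intro h j
    have e := Nm_act D ((h⁻¹ : H) : Equiv.Perm (Fin d)) (XM D w' * insSlot D one j y)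
    rw [D.act_mul, hHfix _ (h⁻¹).2, act_ins D h1 _ _ _ _ hyMH] at e
    simp only [hf]
    rw [← e]
    congr 3
  have hsum : Nat.card H • (z * del D one d y) = ∑ j, f j := by
    rw [← smul_mul_assoc, ← ez, Nm_mul D _ _ (del_mem_S D h1 y), del_apply, Finset.mul_sum,
      map_sum]
  have hfj : ∀ j, f j = ((-1 : ℤ) ^ kzq q' (fun k => k = j ∧ q j0)) •
      Nm D d (XM D (Function.update w' j (w' j * y))) := by
    intro j
    simp only [hf]
    rw [XM_ins D h1 hone w' q' hMH' j _ y hyMH, map_zsmul]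
  -- the part outside the orbit
  have hrest : ∃ y1 ∈ Q, ∑ j ∈ univ.filter (fun j => j ∉ MulAction.orbit H j0), f j
      = Nat.card H • y1 := by
    refine orbit_sum (G := H) Q.toAddSubmonoid _ ?_ f hfinv ?_
    · intro g j hj
      simp only [mem_filter, mem_univ, true_and] at hj ⊢
      intro hh
      apply hj
      have := MulAction.mem_orbit_of_mem_orbit (g⁻¹) hh
      rwa [inv_smul_smul] at this
    · intro j hj
      simp only [mem_filter, mem_univ, true_and] at hj
      have hjj0 : j ≠ j0 := by
        rintro rfl
        exact hj (MulAction.mem_orbit_self _)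
      set w2 := Function.update w' j (w' j * y) with hw2
      set q2 : Fin d → Prop := Function.update q' j (Xor (q' j) (q j0)) with hq2
      have hMH2 : ∀ k, MH P (q2 k) (w2 k) := by
        intro k
        by_cases h : k = j
        · subst h
          simp only [hw2, hq2, Function.update_self]
          exact MH_mul (hMH' k) hyMH
        · simp only [hw2, hq2, Function.update_of_ne h]
          exact hMH' k
      have hq2M : ∀ k, q2 k → k ∈ insert j M' := by
        intro k hk
        by_cases h : k = j
        · exact h ▸ Finset.mem_insert_self _ _
        · simp only [hq2, Function.update_of_ne h] at hk
          exact Finset.mem_insert_of_mem (hqM' k hk)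
      have hw2aa : ∀ k, k ∉ insert j M' → ∀ r s, w2 k r s ∈ P.aa := by
        intro k hk
        rw [Finset.mem_insert, not_or] at hk
        simp only [hw2, Function.update_of_ne hk.1]
        exact hw'aa k hk.2
      have hex : ∃ z ∈ Q, Nm D d (XM D w2)
          = Nat.card (StM w2 ((insert j M' : Finset (Fin d)) : Set (Fin d))) • z := by
        by_cases hjM : j ∈ M'
        · exact ih1 _ _ w2 q2 (by rw [Finset.insert_eq_of_mem hjM, hM'c]) rfl hMH2 hq2M hw2aa
        · refine ih2 _ ?_ (insert j M') w2 q2 (by rw [Finset.card_insert_of_notMem hjM, hM'c])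
            rfl hMH2 hq2M hw2aa
          rw [← hN2]
          have hjM0 : j ∉ M := fun h => hjM (Finset.mem_erase.2 ⟨hjj0, h⟩)
          apply Finset.card_lt_card
          rw [Finset.ssubset_iff_of_subset]
          · refine ⟨j, ?_, ?_⟩
            · simp only [mem_filter, mem_univ, true_and]
              refine ⟨hjM0, fun hone' => hj ?_⟩
              have hsw : Equiv.swap j0 j ∈ H := by
                refine mem_StM.2 ⟨fun k hk => ?_, fun k => ?_⟩
                · apply Equiv.swap_apply_of_ne_of_ne
                  · rintro rfl; simp [hM'] at hk
                  · rintro rfl; exact hjM hk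
                · rw [Equiv.swap_apply_def]
                  split_ifs with ha hb
                  · rw [ha, hw'ne j hjj0, hw'j0, hone']
                  · rw [hb, hw'ne j hjj0, hw'j0, hone']
                  · rfl
              exact ⟨⟨_, hsw⟩, Equiv.swap_apply_left j0 j⟩
            · simp
          · intro k hk
            simp only [mem_filter, mem_univ, true_and, Finset.mem_insert, not_or] at hk ⊢
            obtain ⟨⟨hkj, hkM'⟩, hk1⟩ := hk
            simp only [hw2, Function.update_of_ne hkj] at hk1
            have hkj0 : k ≠ j0 := by
              rintro rfl
              exact hk1 hw'j0
            exact ⟨fun h => hkM' (Finset.mem_erase.2 ⟨hkj0, h⟩), by rwa [hw'ne k hkj0] at hk1⟩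
      obtain ⟨z2, hz2, ez2⟩ := hex
      have hdvd : Nat.card (MulAction.stabilizer H j) ∣
          Nat.card (StM w2 ((insert j M' : Finset (Fin d)) : Set (Fin d))) := by
        apply card_dvd_of_coe
        intro h hh
        have hhj : (h : Equiv.Perm (Fin d)) j = j := MulAction.mem_stabilizer_iff.1 hh
        have hh' := mem_StM.1 h.2
        refine mem_StM.2 ⟨fun k hk => ?_, fun k => ?_⟩
        · rcases Finset.mem_insert.1 (Finset.mem_coe.1 hk) with rfl | hk
          · exact hhj
          · exact hh'.1 k hk
        · by_cases hkj : k = j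
          · rw [hkj, hhj]
          · have : (h : Equiv.Perm (Fin d)) k ≠ j := fun e =>
              hkj ((h : Equiv.Perm (Fin d)).injective (e.trans hhj.symm))
            simp only [hw2, Function.update_of_ne hkj, Function.update_of_ne this]
            exact hh'.2 k
      obtain ⟨p, hp⟩ := hdvd
      refine ⟨((-1 : ℤ) ^ kzq q' (fun k => k = j ∧ q j0)) • (p • z2),
        zsmul_mem (nsmul_mem hz2 p) _, ?_⟩
      rw [hfj j, ← hw2, ez2, hp, mul_smul, smul_comm]
  obtain ⟨y1, hy1, e1⟩ := hrest
  -- the orbit of `j0`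
  have horb : ∑ j ∈ univ.filter (fun j => j ∈ MulAction.orbit H j0), f j
      = (MulAction.orbit H j0).ncard • f j0 := by
    rw [Finset.sum_congr rfl (g := fun _ => f j0), Finset.sum_const]
    · congr 1
      rw [← Set.ncard_coe_finset]
      congr 1
      ext; simp
    · intro j hj
      obtain ⟨h, rfl⟩ := (Finset.mem_filter.1 hj).2
      exact hfinv h j0
  have hos := Subgroup.card_mul_index (MulAction.stabilizer H j0)
  rw [MulAction.index_stabilizer] at hos
  have hf0 : f j0 = Nat.card (MulAction.stabilizer H j0) • (z * del D one d y - y1) := by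
    apply nsmul_cancel D (p := (MulAction.orbit H j0).ncard)
    · intro h0
      rw [h0, mul_zero] at hos
      exact card_ne H hos.symm
    · rw [← horb, ← mul_smul, mul_comm, hos, smul_sub, ← e1, hsum,
        ← Finset.sum_filter_add_sum_filter_not univ (fun j => j ∈ MulAction.orbit H j0)]
      abel
  have hdvd : Nat.card (StM w (M : Set (Fin d))) ∣ Nat.card (MulAction.stabilizer H j0) := by
    rw [← Subgroup.card_map_of_injective (H.subtype_injective)]
    apply Subgroup.card_dvd_of_le
    intro σ hσ
    have hσ' := mem_StM.1 hσ
    have hσj : σ j0 = j0 := hσ'.1 j0 hj0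
    have hσH : σ ∈ H := by
      refine mem_StM.2 ⟨fun k hk => hσ'.1 k (Finset.mem_of_mem_erase hk), fun k => ?_⟩
      by_cases hk : k = j0
      · rw [hk, hσj]
      · have : σ k ≠ j0 := fun e => hk (σ.injective (e.trans hσj.symm))
        rw [hw'ne k hk, hw'ne _ this, hσ'.2]
    exact ⟨⟨σ, hσH⟩, hσj, rfl⟩
  obtain ⟨p, hp⟩ := hdvd
  have hwback : Function.update w' j0 (w' j0 * y) = w := by
    rw [hw'j0, oneM_mul hone, hw'def, Function.update_idem, hy, Function.update_eq_self]
  have hfin := hfj j0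
  rw [hwback] at hfin
  refine ⟨((-1 : ℤ) ^ kzq q' (fun k => k = j0 ∧ q j0)) • (p • (z * del D one d y - y1)),
    zsmul_mem (nsmul_mem (sub_mem (hQ z hz y) hy1) p) _, ?_⟩
  rw [smul_comm, ← mul_smul (Nat.card _), ← hp, ← hf0, hfin, ← mul_smul, ← pow_add,
    Even.neg_one_pow ⟨_, rfl⟩, one_smul]

theorem gen_eta {one : A} (h1 : one ∈ P.aa) (hone : ∀ a : A, one * a = a ∧ a * one = a)
    (ord : LinearOrder (A × Fin n × Fin n))
    (Q : Submodule 𝕜 (T d)) (hA : SchurA D d ≤ Q) (hQ : ∀ z ∈ Q, ∀ m, z * del D one d m ∈ Q) :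
    SchurT D ord d ≤ Q := by
  refine Submodule.span_le.2 ?_
  rintro _ ⟨b, r, s, hb, rfl⟩
  set w : Fin d → β × Fin n × Fin n := fun k => (b k, r k, s k) with hw
  change etaW D ord w ∈ Q
  obtain ⟨z, hz, e⟩ := gen_claim D h1 hone Q hA hQ _ _ (univ.filter fun k => k ∈ nonA P w)
    (fun k => sgl P (w k)) (fun k => P.part (w k).1 = 2) rfl rfl (fun k => sgl_MH _)
    (by
      intro k hk
      simp only [mem_filter, mem_univ, true_and]
      change ¬ P.part (w k).1 = 0
      rw [hk]
      decide)
    (by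
      intro k hk
      apply sgl_aa
      simp only [mem_filter, mem_univ, true_and] at hk
      by_contra hn
      exact hk hn)
  have hinj : ∀ v v' : β × Fin n × Fin n, sgl P v = sgl P v' → v = v' := by
    intro v v' h
    have h2 := congrFun (congrFun h v.2.1) v.2.2
    have h3 : sgl P v v.2.1 v.2.2 = P.bas v.1 := by simp [sgl]
    rw [h3] at h2
    have h4 : sgl P v' v.2.1 v.2.2
      = if v'.2.1 = v.2.1 ∧ v'.2.2 = v.2.2 then P.bas v'.1 else 0 := Matrix.single_apply _ _ _ _ _
    rw [h4] at h2
    split_ifs at h2 with h5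
    · exact Prod.ext (P.bas.injective h2) (Prod.ext h5.1.symm h5.2.symm)
    · exact absurd h2 (P.bas.ne_zero _)
  have hSt : StM (fun k => sgl P (w k)) ((univ.filter fun k => k ∈ nonA P w : Finset (Fin d)) :
      Set (Fin d)) = StM w (nonA P w) := by
    ext σ
    rw [mem_StM, mem_StM]
    refine and_congr (by simp) (forall_congr' fun k => ⟨hinj _ _, fun h => by rw [h]⟩)
  rw [hSt, ← XW_eq_XM, Nm_XW_tri D ord w hb] at e
  rw [nsmul_cancel D (card_ne _) e]
  exact hz

theorem le_adjoin {one : A} (h1 : one ∈ P.aa) (hone : ∀ a : A, one * a = a ∧ a * one = a)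
    (ord : LinearOrder (A × Fin n × Fin n)) (x : T d) (hx : x ∈ SchurT D ord d) :
    x ∈ NonUnitalAlgebra.adjoin 𝕜 ((SchurA D d : Set (T d)) ∪
        {x | ∃ m ∈ Ymat P, x = ∑ j : Fin d, insSlot D one j m}) := by
  set R := NonUnitalAlgebra.adjoin 𝕜 ((SchurA D d : Set (T d)) ∪
        {x | ∃ m ∈ Ymat P, x = ∑ j : Fin d, insSlot D one j m}) with hR
  have hAR : ∀ v ∈ SchurA D d, v ∈ R := fun v hv =>
    NonUnitalAlgebra.subset_adjoin 𝕜 (Or.inl hv)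
  have hdel : ∀ m, del D one d m ∈ R := by
    intro m
    induction sgl_span (P := P) m using Submodule.span_induction with
    | zero => rw [map_zero]; exact zero_mem _
    | add x y _ _ hx hy => rw [map_add]; exact add_mem hx hy
    | smul c x _ hx => rw [map_smul]; exact SMulMemClass.smul_mem _ hx
    | mem x hx =>
      obtain ⟨v, rfl⟩ := hx
      by_cases hv : P.part v.1 = 0
      · apply hAR
        refine ⟨?_, del_mem_S D h1 _⟩
        rw [del_apply]
        refine sum_mem fun j _ => ?_
        rw [insSlot_eq]
        refine sum_mem fun r _ => sum_mem fun s _ =>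
          Submodule.subset_span ⟨_, _, _, fun k => ?_, rfl⟩
        by_cases h : k = j
        · subst h
          simp only [Function.update_self]
          exact sgl_aa v hv _ _
        · rw [Function.update_of_ne h]
          exact oneM_aa h1 _ _
      · exact NonUnitalAlgebra.subset_adjoin 𝕜
          (Or.inr ⟨sgl P v, Submodule.subset_span ⟨v.1, v.2.1, v.2.2, hv, rfl⟩, rfl⟩)
  exact gen_eta D h1 hone ord R.toSubmodule hAR (fun z hz m => mul_mem (S := NonUnitalSubalgebra 𝕜 (T d)) hz (hdel m)) hx

end Generation

/-- Suppose `(A,𝔞)` is a unital good pair.  Then `T^A_𝔞(n,d)` is generated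
as a `𝕜`-algebra by `S^𝔞(n,d)` together with the elements
`1^{⊗(d−1)} * y = Σ_{e=0}^{d−1} 1^{⊗(d−1−e)} ⊗ y ⊗ 1^{⊗e}`, `y ∈ Y`; consequently
`T^A_𝔞(n,d)` is the subalgebra of `S^A(n,d)` generated by `S^𝔞(n,d)` and the elements
`Σ_{e=0}^{d−1} 1^{⊗(d−1−e)} ⊗ ξ ⊗ 1^{⊗e}`, `ξ ∈ M_n(A)`. -/
theorem statement11 {𝕜 A β : Type} [CommRing 𝕜] [IsDomain 𝕜] [CharZero 𝕜]
    [NonUnitalRing A] [Module 𝕜 A] [SMulCommClass 𝕜 A A] [IsScalarTower 𝕜 A A]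
    {n : ℕ} (hn : 0 < n) {T : ℕ → Type} [∀ e, NonUnitalRing (T e)] [∀ e, Module 𝕜 (T e)]
    [∀ e, SMulCommClass 𝕜 (T e) (T e)] [∀ e, IsScalarTower 𝕜 (T e) (T e)]
    (P : GoodPair 𝕜 A β) (D : Tower 𝕜 A β n T P) (ord : LinearOrder (A × Fin n × Fin n))
    (d : ℕ) (one : A) (hone_aa : one ∈ P.aa) (hone : ∀ a : A, one * a = a ∧ a * one = a) :
    ((NonUnitalAlgebra.adjoin 𝕜 ((SchurA D d : Set (T d)) ∪
        {x | ∃ m ∈ Ymat P, x = ∑ j : Fin d, insSlot D one j m}) : Set (T d))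
      = (SchurT D ord d : Set (T d))) ∧
    ((NonUnitalAlgebra.adjoin 𝕜 ((SchurA D d : Set (T d)) ∪
        {x | ∃ m : Matrix (Fin n) (Fin n) A, x = ∑ j : Fin d, insSlot D one j m}) : Set (T d))
      = (SchurT D ord d : Set (T d))) := by
  have hle := adjoin_le (d := d) D ord hone_aa hone
  have hge := le_adjoin (d := d) D hone_aa hone ord
  have hmono : NonUnitalAlgebra.adjoin 𝕜 ((SchurA D d : Set (T d)) ∪
        {x | ∃ m ∈ Ymat P, x = ∑ j : Fin d, insSlot D one j m})
      ≤ NonUnitalAlgebra.adjoin 𝕜 ((SchurA D d : Set (T d)) ∪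
        {x | ∃ m : Matrix (Fin n) (Fin n) A, x = ∑ j : Fin d, insSlot D one j m}) := by
    apply NonUnitalAlgebra.adjoin_mono
    apply Set.union_subset_union_right
    rintro x ⟨m, -, hm⟩
    exact ⟨m, hm⟩
  exact ⟨Set.Subset.antisymm (fun x hx => hle x (hmono hx)) (fun x hx => hge x hx),
    Set.Subset.antisymm (fun x hx => hle x hx) (fun x hx => hmono (hge x hx))⟩
end GS
end
end

section
/- Let e ∈ S be an idempotent. Then e is a double centralizer idempotent for S if and only if e is a double centralizer idempotent for S_𝕂 := S ⊗_𝕜 𝕂 and e is sound for S. -/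
open Finset

open scoped Classical TensorProduct

noncomputable section

namespace GS

variable {𝕜 A β : Type} [CommRing 𝕜] [NonUnitalRing A] [Module 𝕜 A]

variable {n : ℕ} {T : ℕ → Type} [∀ e, NonUnitalRing (T e)] [∀ e, Module 𝕜 (T e)]

/-- The map `λ_s`, left multiplication by `s` on `S·e = {x | x·e = x}`, an element of
`End_{eSe}(Se)`. -/
def lmulSe (𝕜 : Type) {S : Type} [CommRing 𝕜] [Ring S] [Algebra 𝕜 S] (e s : S) :
    ↥((⊤ : Submodule 𝕜 S) ⊓ rfix 𝕜 e) →ₗ[𝕜] ↥((⊤ : Submodule 𝕜 S) ⊓ rfix 𝕜 e) where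
  toFun x := ⟨s * (x : S), by
    refine Submodule.mem_inf.mpr ⟨Submodule.mem_top, ?_⟩
    have hx : (x : S) * e = (x : S) := (Submodule.mem_inf.mp x.2).2
    show s * (x : S) * e = s * (x : S)
    rw [mul_assoc, hx]⟩
  map_add' x y := by
    apply Subtype.ext
    simp [mul_add]
  map_smul' c x := by
    apply Subtype.ext
    simp [mul_smul_comm]

section Helpers15

variable {k : Type} [CommRing k] [IsDomain k] {S : Type} [Ring S] [Algebra k S]

lemma clear_den (z : FractionRing k ⊗[k] S) :
    ∃ d : k, d ≠ 0 ∧ ∃ s : S, d • z = (1 : FractionRing k) ⊗ₜ[k] s := by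
  induction z using TensorProduct.induction_on with
  | zero => exact ⟨1, one_ne_zero, 0, by simp⟩
  | tmul x y =>
    obtain ⟨⟨a, d⟩, h⟩ := IsLocalization.surj (nonZeroDivisors k) x
    refine ⟨d, nonZeroDivisors.ne_zero d.2, a • y, ?_⟩
    rw [TensorProduct.smul_tmul', TensorProduct.tmul_smul, TensorProduct.smul_tmul',
      Algebra.smul_def, mul_comm]
    simp only at h
    rw [h, Algebra.smul_def, mul_one]
  | add x y hx hy =>
    obtain ⟨d, hd, s, hs⟩ := hx
    obtain ⟨d', hd', s', hs'⟩ := hy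
    refine ⟨d * d', mul_ne_zero hd hd', d' • s + d • s', ?_⟩
    rw [smul_add, TensorProduct.tmul_add, TensorProduct.tmul_smul, TensorProduct.tmul_smul,
      ← hs, ← hs', smul_smul, smul_smul, mul_comm d' d]

lemma iota_inj [Module.Free k S] {s t : S}
    (h : (1 : FractionRing k) ⊗ₜ[k] s = (1 : FractionRing k) ⊗ₜ[k] t) : s = t := by
  exact Algebra.TensorProduct.includeRight_injective
    (FaithfulSMul.algebraMap_injective k (FractionRing k)) h

lemma smul_tensor_cancel {d : k} (hd : d ≠ 0) {x y : FractionRing k ⊗[k] S}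
    (h : d • x = d • y) : x = y := by
  have hd' : algebraMap k (FractionRing k) d ≠ 0 := by
    simpa using hd
  rw [← algebraMap_smul (FractionRing k) d x, ← algebraMap_smul (FractionRing k) d y] at h
  exact smul_right_injective _ hd' h

lemma smul_cancel [Module.Free k S] {d : k} (hd : d ≠ 0) {x y : S}
    (h : d • x = d • y) : x = y :=
  smul_right_injective _ hd h

lemma clear_den_lin [Module.Finite k S]
    (g : S →ₗ[k] FractionRing k ⊗[k] S) :
    ∃ d : k, d ≠ 0 ∧ ∀ x, ∃ s : S, d • g x = (1 : FractionRing k) ⊗ₜ[k] s := by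
  have key : ∀ N : Submodule k S, N.FG →
      ∃ d : k, d ≠ 0 ∧ ∀ x ∈ N, ∃ s : S, d • g x = (1 : FractionRing k) ⊗ₜ[k] s := by
    intro N hN
    induction N, hN using Submodule.fg_induction with
    | singleton x =>
      obtain ⟨d, hd, s, hs⟩ := clear_den (g x)
      refine ⟨d, hd, fun y hy => ?_⟩
      obtain ⟨a, rfl⟩ := Submodule.mem_span_singleton.mp hy
      exact ⟨a • s, by rw [map_smul, smul_comm, hs, TensorProduct.tmul_smul]⟩
    | sup M N _ _ hM hN =>
      obtain ⟨d, hd, h⟩ := hM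
      obtain ⟨d', hd', h'⟩ := hN
      refine ⟨d * d', mul_ne_zero hd hd', fun y hy => ?_⟩
      obtain ⟨u, hu, v, hv, rfl⟩ := Submodule.mem_sup.mp hy
      obtain ⟨s, hs⟩ := h u hu
      obtain ⟨s', hs'⟩ := h' v hv
      refine ⟨d' • s + d • s', ?_⟩
      rw [map_add, smul_add, TensorProduct.tmul_add, TensorProduct.tmul_smul,
        TensorProduct.tmul_smul, ← hs, ← hs', smul_smul, smul_smul, mul_comm d' d]
  obtain ⟨d, hd, h⟩ := key ⊤ Module.Finite.fg_top
  exact ⟨d, hd, fun x => h x Submodule.mem_top⟩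

/-- every nonzero element is a multiple of an indivisible one -/
lemma exists_indiv [IsPrincipalIdealRing k] [Module.Free k S] [Module.Finite k S]
    (s : S) (hs : s ≠ 0) :
    ∃ (m : k) (t : S), s = m • t ∧ ∀ (c : k) (w : S), t = c • w → IsUnit c := by
  let b := Module.Free.chooseBasis k S
  obtain ⟨m, hm⟩ := (IsPrincipalIdealRing.principal
    (Ideal.span (Set.range fun i => b.repr s i))).principal
  have hm' : Ideal.span (Set.range fun i => b.repr s i) = Ideal.span {m} := hm
  have hdiv : ∀ i, ∃ c, b.repr s i = m * c := by
    intro i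
    have : b.repr s i ∈ Ideal.span {m} := hm' ▸ Ideal.subset_span ⟨i, rfl⟩
    exact Ideal.mem_span_singleton.mp this
  choose c hc using hdiv
  have hst : s = m • ∑ i, c i • b i := by
    conv_lhs => rw [← b.sum_repr s]
    rw [Finset.smul_sum]
    exact Finset.sum_congr rfl fun i _ => by rw [hc, mul_smul]
  have hm0 : m ≠ 0 := by
    rintro rfl
    exact hs (by rw [hst, zero_smul])
  refine ⟨m, ∑ i, c i • b i, hst, fun q w hq => ?_⟩
  have hqc : ∀ i, q ∣ c i := by
    intro i
    refine ⟨b.repr w i, ?_⟩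
    have := congrArg (fun z => b.repr z i) hq
    simp only [b.repr_sum_self, map_smul, Finsupp.smul_apply, smul_eq_mul] at this
    exact this
  have h1 : m ∈ Ideal.span (Set.range fun i => b.repr s i) :=
    hm' ▸ Ideal.mem_span_singleton_self m
  have h2 : Ideal.span (Set.range fun i => b.repr s i) ≤ Ideal.span {m * q} := by
    rw [Ideal.span_le]
    rintro _ ⟨i, rfl⟩
    refine Ideal.mem_span_singleton.mpr ?_
    simp only [hc]
    exact mul_dvd_mul_left m (hqc i)
  obtain ⟨r, hr⟩ := Ideal.mem_span_singleton.mp (h2 h1)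
  refine IsUnit.of_mul_eq_one r ?_
  apply mul_left_cancel₀ hm0
  rw [← mul_assoc, ← hr, mul_one]

lemma mem_e {R : Type} [Ring R] [Algebra k R] {e x : R} :
    x ∈ (⊤ : Submodule k R) ⊓ rfix k e ↔ x * e = x := by
  rw [Submodule.mem_inf]
  exact ⟨fun h => h.2, fun h => ⟨Submodule.mem_top, h⟩⟩

lemma lmul_equivar (e s : S) : IsEquivar k (⊤ : Submodule k S) e (lmulSe k e s) := by
  intro x c _ _ h
  exact (mul_assoc _ _ _).symm

variable [Module.Free k S] [Module.Finite k S]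

local notation "K" => FractionRing k

lemma fwd_sound (e : S) (H : IsDCI k (⊤ : Submodule k S) e)
    (s : S) (hs : ∀ (m : k) (w : S), s = m • w → IsUnit m) (m : k)
    (g : ↥((⊤ : Submodule k S) ⊓ rfix k e) →ₗ[k] ↥((⊤ : Submodule k S) ⊓ rfix k e))
    (hg : IsEquivar k (⊤ : Submodule k S) e g) (h : lmulSe k e s = m • g) : IsUnit m := by
  obtain ⟨w, -, hw⟩ := H.2 g hg
  refine hs m w (H.1 _ Submodule.mem_top _ Submodule.mem_top fun x hx => ?_)
  have h1 := congrArg (fun F => ((F ⟨x, hx⟩ : ↥((⊤ : Submodule k S) ⊓ rfix k e)) : S)) h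
  have h2 : s * x = m • (g ⟨x, hx⟩ : S) := h1
  rw [h2, hw, smul_mul_assoc]

lemma fwd_inj (e : S) (H : IsDCI k (⊤ : Submodule k S) e)
    (s s' : K ⊗[k] S)
    (h : ∀ x ∈ (⊤ : Submodule K (K ⊗[k] S)) ⊓ rfix K ((1 : K) ⊗ₜ[k] e), s * x = s' * x) :
    s = s' := by
  obtain ⟨d, hd, t, ht⟩ := clear_den (s - s')
  have ht0 : t = 0 := by
    refine H.1 _ Submodule.mem_top _ Submodule.mem_top fun x hx => ?_
    have hx' := mem_e.mp hx
    have := h ((1 : K) ⊗ₜ[k] x) (mem_e.mpr (by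
      rw [Algebra.TensorProduct.tmul_mul_tmul, hx', one_mul]))
    apply iota_inj (k := k)
    have h3 : (1 : K) ⊗ₜ[k] (t * x) = ((1 : K) ⊗ₜ[k] t) * ((1 : K) ⊗ₜ[k] x) := by
      rw [Algebra.TensorProduct.tmul_mul_tmul, one_mul]
    rw [h3, ← ht, smul_mul_assoc, sub_mul, this, sub_self, smul_zero, zero_mul,
      TensorProduct.tmul_zero]
  rw [ht0, TensorProduct.tmul_zero] at ht
  refine sub_eq_zero.mp (smul_tensor_cancel hd ?_)
  rw [ht, smul_zero]

lemma fwd_surj (e : S) (he : e * e = e) (H : IsDCI k (⊤ : Submodule k S) e)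
    (f : ↥((⊤ : Submodule K (K ⊗[k] S)) ⊓ rfix K ((1 : K) ⊗ₜ[k] e)) →ₗ[K]
      ↥((⊤ : Submodule K (K ⊗[k] S)) ⊓ rfix K ((1 : K) ⊗ₜ[k] e)))
    (hf : IsEquivar K (⊤ : Submodule K (K ⊗[k] S)) ((1 : K) ⊗ₜ[k] e) f) :
    ∃ s ∈ (⊤ : Submodule K (K ⊗[k] S)),
      ∀ x : ↥((⊤ : Submodule K (K ⊗[k] S)) ⊓ rfix K ((1 : K) ⊗ₜ[k] e)),
        (f x : K ⊗[k] S) = s * (x : K ⊗[k] S) := by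
  have hmem : ∀ x : S, (1 : K) ⊗ₜ[k] (x * e) ∈
      (⊤ : Submodule K (K ⊗[k] S)) ⊓ rfix K ((1 : K) ⊗ₜ[k] e) := fun x => mem_e.mpr (by
    rw [Algebra.TensorProduct.tmul_mul_tmul, mul_assoc, he, one_mul])
  let g : S →ₗ[k] K ⊗[k] S :=
    { toFun := fun x => (f ⟨_, hmem x⟩ : K ⊗[k] S)
      map_add' := by
        intro x y
        rw [← Submodule.coe_add, ← map_add]
        congr 2
        apply Subtype.ext
        simp [add_mul, TensorProduct.tmul_add]
      map_smul' := by
        intro c x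
        have : (⟨_, hmem (c • x)⟩ : ↥((⊤ : Submodule K (K ⊗[k] S)) ⊓ rfix K ((1 : K) ⊗ₜ[k] e)))
            = (algebraMap k K c) • ⟨_, hmem x⟩ := by
          apply Subtype.ext
          simp [TensorProduct.tmul_smul]
        rw [this, map_smul, Submodule.coe_smul, algebraMap_smul, RingHom.id_apply] }
  obtain ⟨d, hd, hD⟩ := clear_den_lin g
  choose t ht using hD
  have hte : ∀ x, t x * e = t x := by
    intro x
    apply iota_inj (k := k)
    have h1 : (1 : K) ⊗ₜ[k] (t x * e) = ((1 : K) ⊗ₜ[k] t x) * ((1 : K) ⊗ₜ[k] e) := by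
      rw [Algebra.TensorProduct.tmul_mul_tmul, one_mul]
    rw [h1, ← ht, smul_mul_assoc]
    congr 1
    exact mem_e.mp (f ⟨_, hmem x⟩).2
  let f0 : ↥((⊤ : Submodule k S) ⊓ rfix k e) →ₗ[k] ↥((⊤ : Submodule k S) ⊓ rfix k e) :=
    { toFun := fun x => ⟨t x, mem_e.mpr (hte x)⟩
      map_add' := by
        intro x y
        apply Subtype.ext
        apply iota_inj (k := k)
        simp only [Submodule.coe_add, TensorProduct.tmul_add, ← ht, map_add, smul_add]
      map_smul' := by
        intro c x
        apply Subtype.ext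
        apply iota_inj (k := k)
        simp only [Submodule.coe_smul, TensorProduct.tmul_smul, ← ht, map_smul, RingHom.id_apply]
        rw [smul_comm] }
  have hf0 : IsEquivar k (⊤ : Submodule k S) e f0 := by
    intro x c _ hc h
    change t (x * c) = t x * c
    apply iota_inj (k := k)
    have h1 : (1 : K) ⊗ₜ[k] (t x * c) = ((1 : K) ⊗ₜ[k] t x) * ((1 : K) ⊗ₜ[k] c) := by
      rw [Algebra.TensorProduct.tmul_mul_tmul, one_mul]
    rw [h1, ← ht, ← ht, smul_mul_assoc]
    congr 1
    have hx : (x : S) * e = x := mem_e.mp x.2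
    have hxc : (x : S) * c * e = x * c := mem_e.mp h
    have hm : (1 : K) ⊗ₜ[k] ((x : S) * e) * ((1 : K) ⊗ₜ[k] c) =
        (1 : K) ⊗ₜ[k] ((x : S) * c * e) := by
      rw [Algebra.TensorProduct.tmul_mul_tmul, one_mul, hx, hxc]
    have h2 := hf ⟨_, hmem x⟩ ((1 : K) ⊗ₜ[k] c) Submodule.mem_top (by
      rw [Algebra.TensorProduct.tmul_mul_tmul, Algebra.TensorProduct.tmul_mul_tmul, hc, one_mul,
        one_mul]) (by
      rw [hm]; exact hmem _)
    refine Eq.trans ?_ h2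
    change ((f _ : ↥((⊤ : Submodule K (K ⊗[k] S)) ⊓ rfix K ((1 : K) ⊗ₜ[k] e))) : K ⊗[k] S) = _
    congr 2
    exact Subtype.ext hm.symm
  obtain ⟨s0, -, hs0⟩ := H.2 f0 hf0
  have hdK : algebraMap k K d ≠ 0 := by simpa using hd
  refine ⟨(algebraMap k K d)⁻¹ ⊗ₜ[k] s0, Submodule.mem_top, fun x => ?_⟩
  obtain ⟨c, hc, y, hy⟩ := clear_den (x : K ⊗[k] S)
  have hcK : algebraMap k K c ≠ 0 := by simpa using hc
  have hye : y * e = y := by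
    apply iota_inj (k := k)
    have h1 : (1 : K) ⊗ₜ[k] (y * e) = ((1 : K) ⊗ₜ[k] y) * ((1 : K) ⊗ₜ[k] e) := by
      rw [Algebra.TensorProduct.tmul_mul_tmul, one_mul]
    rw [h1, ← hy, smul_mul_assoc]
    congr 1
    exact mem_e.mp x.2
  have hty : t y = s0 * y := hs0 ⟨y, mem_e.mpr hye⟩
  apply smul_tensor_cancel hc
  apply smul_tensor_cancel hd
  have hfx : c • (f x : K ⊗[k] S) = g y := by
    have h1 : (algebraMap k K c) • x = ⟨_, hmem y⟩ := by
      apply Subtype.ext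
      rw [Submodule.coe_smul, algebraMap_smul, hy]
      exact congrArg (fun z => (1 : K) ⊗ₜ[k] z) hye.symm
    rw [← algebraMap_smul K c (f x : K ⊗[k] S), ← Submodule.coe_smul, ← map_smul, h1]
    rfl
  rw [hfx, ht, hty, ← mul_smul_comm, hy, ← smul_mul_assoc, TensorProduct.smul_tmul',
    Algebra.smul_def, mul_inv_cancel₀ hdK, Algebra.TensorProduct.tmul_mul_tmul, one_mul]

lemma bwd_inj (e : S) 
    (H : IsDCI K (⊤ : Submodule K (K ⊗[k] S)) ((1 : K) ⊗ₜ[k] e)) (s s' : S)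
    (h : ∀ x ∈ (⊤ : Submodule k S) ⊓ rfix k e, s * x = s' * x) : s = s' := by
  apply iota_inj (k := k)
  refine H.1 _ Submodule.mem_top _ Submodule.mem_top fun x hx => ?_
  obtain ⟨c, hc, y, hy⟩ := clear_den x
  have hye : y * e = y := by
    apply iota_inj (k := k)
    have h1 : (1 : K) ⊗ₜ[k] (y * e) = ((1 : K) ⊗ₜ[k] y) * ((1 : K) ⊗ₜ[k] e) := by
      rw [Algebra.TensorProduct.tmul_mul_tmul, one_mul]
    rw [h1, ← hy, smul_mul_assoc]
    congr 1
    exact mem_e.mp hx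
  apply smul_tensor_cancel hc
  rw [← mul_smul_comm, ← mul_smul_comm, hy, Algebra.TensorProduct.tmul_mul_tmul,
    Algebra.TensorProduct.tmul_mul_tmul, h y (mem_e.mpr hye)]

lemma bwd_den (e : S) (he : e * e = e)
    (H : IsDCI K (⊤ : Submodule K (K ⊗[k] S)) ((1 : K) ⊗ₜ[k] e))
    (f : ↥((⊤ : Submodule k S) ⊓ rfix k e) →ₗ[k] ↥((⊤ : Submodule k S) ⊓ rfix k e))
    (hf : IsEquivar k (⊤ : Submodule k S) e f) :
    ∃ (d : k) (s : S), d ≠ 0 ∧ ∀ x, d • (f x : S) = s * x := by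
  have hmem : ∀ x : S, x * e ∈ (⊤ : Submodule k S) ⊓ rfix k e :=
    fun x => mem_e.mpr (by rw [mul_assoc, he])
  let F : S →ₗ[k] S :=
    { toFun := fun x => (f ⟨_, hmem x⟩ : S)
      map_add' := by
        intro x y
        rw [← Submodule.coe_add, ← map_add]
        congr 2
        apply Subtype.ext
        simp [add_mul]
      map_smul' := by
        intro c x
        rw [RingHom.id_apply, ← Submodule.coe_smul, ← map_smul]
        congr 2
        apply Subtype.ext
        simp }
  have hFe : ∀ x, F x * e = F x := fun x => mem_e.mp (f ⟨_, hmem x⟩).2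
  have hFx : ∀ x : ↥((⊤ : Submodule k S) ⊓ rfix k e), F x = f x := by
    intro x
    change ((f _ : ↥((⊤ : Submodule k S) ⊓ rfix k e)) : S) = _
    congr 2
    exact Subtype.ext (mem_e.mp x.2)
  have hFm : ∀ x t, F (x * (e * t * e)) = F x * (e * t * e) := by
    intro x t
    have h0 : x * e * (e * t * e) = x * (e * t * e) * e := by
      simp only [mul_assoc, he]
      simp only [← mul_assoc, he]
      try rw [mul_assoc x e e, he]
    have := hf ⟨_, hmem x⟩ (e * t * e) Submodule.mem_top
      (by simp only [mul_assoc, he]; simp only [← mul_assoc, he]) (by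
        rw [h0]; exact hmem _)
    refine Eq.trans ?_ this
    change ((f _ : ↥((⊤ : Submodule k S) ⊓ rfix k e)) : S) = _
    congr 2
    exact Subtype.ext h0.symm
  let FK : K ⊗[k] S →ₗ[K] K ⊗[k] S := F.baseChange K
  have hFKe : ∀ x, FK x * ((1 : K) ⊗ₜ[k] e) = FK x := by
    intro x
    induction x using TensorProduct.induction_on with
    | zero => simp
    | tmul a y =>
      rw [LinearMap.baseChange_tmul, Algebra.TensorProduct.tmul_mul_tmul, hFe, mul_one]
    | add x y hx hy => rw [map_add, add_mul, hx, hy]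
  have hFKm : ∀ x c, FK (x * (((1 : K) ⊗ₜ[k] e) * c * ((1 : K) ⊗ₜ[k] e)))
      = FK x * (((1 : K) ⊗ₜ[k] e) * c * ((1 : K) ⊗ₜ[k] e)) := by
    intro x c
    induction x using TensorProduct.induction_on with
    | zero => simp
    | add x y hx hy => rw [map_add, add_mul, add_mul, map_add, hx, hy]
    | tmul a y =>
      induction c using TensorProduct.induction_on with
      | zero => simp
      | add c c' hx hy => rw [mul_add, add_mul, mul_add, mul_add, map_add, hx, hy]
      | tmul b z =>
        simp only [FK, Algebra.TensorProduct.tmul_mul_tmul, LinearMap.baseChange_tmul, hFm]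
  let fK : ↥((⊤ : Submodule K (K ⊗[k] S)) ⊓ rfix K ((1 : K) ⊗ₜ[k] e)) →ₗ[K]
      ↥((⊤ : Submodule K (K ⊗[k] S)) ⊓ rfix K ((1 : K) ⊗ₜ[k] e)) :=
    FK.restrict (fun x _ => mem_e.mpr (hFKe x))
  obtain ⟨σ, -, hσ⟩ := H.2 fK (by
    intro x c _ hc h
    change FK (x * c) = FK x * c
    rw [← hc]
    exact hFKm _ _)
  obtain ⟨d, hd, s, hs⟩ := clear_den σ
  refine ⟨d, s, hd, fun x => ?_⟩
  apply iota_inj (k := k)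
  have hx := hσ ⟨(1 : K) ⊗ₜ[k] (x : S), mem_e.mpr (by
    rw [Algebra.TensorProduct.tmul_mul_tmul, mem_e.mp x.2, one_mul])⟩
  have hx' : (1 : K) ⊗ₜ[k] F x = σ * ((1 : K) ⊗ₜ[k] (x : S)) := hx
  rw [hFx] at hx'
  have h1 : (1 : K) ⊗ₜ[k] (s * x) = ((1 : K) ⊗ₜ[k] s) * ((1 : K) ⊗ₜ[k] (x : S)) := by
    rw [Algebra.TensorProduct.tmul_mul_tmul, one_mul]
  rw [TensorProduct.tmul_smul, hx', h1, ← hs, smul_mul_assoc]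

lemma bwd_surj [IsPrincipalIdealRing k] (e : S) (he : e * e = e)
    (H : IsDCI K (⊤ : Submodule K (K ⊗[k] S)) ((1 : K) ⊗ₜ[k] e))
    (Hs : ∀ s : S, (∀ (m : k) (w : S), s = m • w → IsUnit m) →
          ∀ (m : k) (g : ↥((⊤ : Submodule k S) ⊓ rfix k e) →ₗ[k]
              ↥((⊤ : Submodule k S) ⊓ rfix k e)),
            IsEquivar k (⊤ : Submodule k S) e g → lmulSe k e s = m • g → IsUnit m)
    (f : ↥((⊤ : Submodule k S) ⊓ rfix k e) →ₗ[k] ↥((⊤ : Submodule k S) ⊓ rfix k e))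
    (hf : IsEquivar k (⊤ : Submodule k S) e f) :
    ∃ s ∈ (⊤ : Submodule k S), ∀ x : ↥((⊤ : Submodule k S) ⊓ rfix k e), (f x : S) = s * x := by
  obtain ⟨d, s, hd, hds⟩ := bwd_den e he H f hf
  by_cases hs : s = 0
  · refine ⟨0, Submodule.mem_top, fun x => smul_cancel hd ?_⟩
    rw [hds, hs, zero_mul, smul_zero]
  obtain ⟨m, t, rfl, ht⟩ := exists_indiv (k := k) s hs
  obtain ⟨g, hg⟩ := (IsPrincipalIdealRing.principal (Ideal.span ({d, m} : Set k))).principal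
  have hg' : Ideal.span ({d, m} : Set k) = Ideal.span {g} := hg
  obtain ⟨d', rfl⟩ : g ∣ d := Ideal.mem_span_singleton.mp
    (hg' ▸ Ideal.subset_span (by simp))
  obtain ⟨m', rfl⟩ : g ∣ m := Ideal.mem_span_singleton.mp
    (hg' ▸ Ideal.subset_span (by simp))
  obtain ⟨a, b, hab⟩ := Ideal.mem_span_pair.mp (hg' ▸ Ideal.mem_span_singleton_self g)
  have hg0 : g ≠ 0 := left_ne_zero_of_mul hd
  have hab' : a * d' + b * m' = 1 := by
    apply mul_left_cancel₀ hg0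
    linear_combination hab
  have hds' : ∀ x : ↥((⊤ : Submodule k S) ⊓ rfix k e), d' • (f x : S) = m' • (t * x) := by
    intro x
    apply smul_cancel hg0
    rw [smul_smul, smul_smul, hds, smul_mul_assoc]
  have hu : IsUnit d' := by
    refine Hs t ht d' (a • lmulSe k e t + b • f) ?_ ?_
    · intro x c hc hc' h
      have h1 := hf x c hc hc' h
      have h2 := lmul_equivar (k := k) e t x c hc hc' h
      simp only [LinearMap.add_apply, LinearMap.smul_apply, Submodule.coe_add,
        Submodule.coe_smul, h1, h2, add_mul, smul_mul_assoc]
    · ext x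
      change t * (x : S) = d' • (a • (t * (x : S)) + b • (f x : S))
      rw [smul_add, smul_comm d' b, hds', smul_smul, smul_smul, ← add_smul, mul_comm d' a, hab',
        one_smul]
  obtain ⟨r, hr⟩ := hu.exists_left_inv
  refine ⟨(r * m') • t, Submodule.mem_top, fun x => ?_⟩
  rw [smul_mul_assoc, mul_smul, ← hds', smul_smul, hr, one_smul]

end Helpers15

/-- Let `𝕜` be a PID of characteristic `0` with fraction field `𝕂`, `S` a
`𝕜`-algebra free of finite rank as a `𝕜`-module and `e ∈ S` an idempotent.  Then `e` is a
double centralizer idempotent for `S` if and only if `e` is a double centralizer idempotent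
for `S_𝕂 = 𝕂 ⊗ S` and `e` is sound for `S` (i.e. `λ` sends indivisible elements of `S` to
indivisible elements of `End_{eSe}(Se)`). -/
theorem statement15 {𝕜 : Type} [CommRing 𝕜] [IsDomain 𝕜] [IsPrincipalIdealRing 𝕜]
    [CharZero 𝕜] {S : Type} [Ring S] [Algebra 𝕜 S] [Module.Free 𝕜 S] [Module.Finite 𝕜 S]
    (e : S) (he : e * e = e) :
    IsDCI 𝕜 (⊤ : Submodule 𝕜 S) e ↔
      (IsDCI (FractionRing 𝕜) (⊤ : Submodule (FractionRing 𝕜) (FractionRing 𝕜 ⊗[𝕜] S))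
          ((1 : FractionRing 𝕜) ⊗ₜ[𝕜] e) ∧
        ∀ s : S, (∀ (m : 𝕜) (w : S), s = m • w → IsUnit m) →
          ∀ (m : 𝕜) (g : ↥((⊤ : Submodule 𝕜 S) ⊓ rfix 𝕜 e) →ₗ[𝕜]
              ↥((⊤ : Submodule 𝕜 S) ⊓ rfix 𝕜 e)),
            IsEquivar 𝕜 (⊤ : Submodule 𝕜 S) e g → lmulSe 𝕜 e s = m • g → IsUnit m) := by
  constructor
  · intro H
    exact ⟨⟨fun s _ s' _ h => fwd_inj e H s s' h, fun f hf => fwd_surj e he H f hf⟩,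
      fun s hs m g hg h => fwd_sound e H s hs m g hg h⟩
  · rintro ⟨H, Hs⟩
    exact ⟨fun s _ s' _ h => bwd_inj e H s s' h, fun f hf => bwd_surj e he H Hs f hf⟩
end GS
end
end
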